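/- Let p be a prime with p ≡ 3 (mod 4) and 2^{p−1} ≡ 1 (mod p^2), let q1 be a prime factor of p − 2 such that q1^{p−1} ≢ 1 (mod p^2), and let n be an odd composite number. Then p splits in the imaginary quadratic field K = ℚ(√(q1^2 − p^n)), and for any prime ideal ℘ of the ring of integers of K lying over p, the order of the ideal class of ℘ in the ideal class group of K is exactly n. -/

import Mathlib

theorem pow_div_le_pow_mul_prod_factorial (K : ℕ) :
    K ^ (K * (K - 1) / 2) ≤ 8 ^ (K * (K - 1) / 2) * ∏ k ∈ Finset.range K, k.factorial := by
  have key : ∀ K : ℕ, (K : ℝ) ^ (∑ k ∈ Finset.range K, k) ≤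
      Real.exp 2 ^ (∑ k ∈ Finset.range K, k) *
        ((∏ k ∈ Finset.range K, k.factorial : ℕ) : ℝ) := by
    intro K
    induction K with
    | zero => simp
    | succ K ih =>
      rcases Nat.eq_zero_or_pos K with rfl | hK
      · simp
      have hK' : (0 : ℝ) < K := by exact_mod_cast hK
      have hS : ((∑ k ∈ Finset.range K, k : ℕ) : ℝ) = K * (K - 1) / 2 := by
        have := Finset.sum_range_id_mul_two K
        have h : ((∑ k ∈ Finset.range K, k : ℕ) : ℝ) * 2 = K * (K - 1) := by
          rw [← Nat.cast_pred hK]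
          exact_mod_cast this
        linarith
      have h1 : ((K + 1 : ℕ) : ℝ) ≤ K * Real.exp (1 / K) := by
        have := Real.add_one_le_exp (1 / (K : ℝ))
        push_cast
        calc (K : ℝ) + 1 = K * (1 / K + 1) := by field_simp; ring
          _ ≤ _ := by gcongr
      have h2 : (K : ℝ) ^ K ≤ Real.exp K * K.factorial := by
        have := Real.pow_div_factorial_le_exp (K : ℝ) hK'.le K
        rwa [div_le_iff₀ (by positivity)] at this
      rw [Finset.sum_range_succ, Finset.prod_range_succ]
      set S := ∑ k ∈ Finset.range K, k
      have h3 : Real.exp (1 / K) ^ (S + K) ≤ Real.exp K := by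
        rw [← Real.exp_nat_mul]
        apply Real.exp_le_exp.mpr
        push_cast
        rw [hS]
        have : (1 : ℝ) ≤ K := by exact_mod_cast hK
        field_simp
        nlinarith
      calc ((K + 1 : ℕ) : ℝ) ^ (S + K) ≤ (K * Real.exp (1 / K)) ^ (S + K) := by gcongr
        _ = (K : ℝ) ^ S * K ^ K * Real.exp (1 / K) ^ (S + K) := by rw [mul_pow, pow_add]
        _ ≤ (Real.exp 2 ^ S * ((∏ k ∈ Finset.range K, k.factorial : ℕ) : ℝ)) *
            (Real.exp K * K.factorial) * Real.exp K := by gcongr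
        _ = _ := by
          rw [pow_add, ← Real.exp_nat_mul 2 K, mul_comm (K : ℝ) 2, two_mul, Real.exp_add]
          push_cast
          ring
  have h8 : Real.exp 2 ≤ 8 := by
    have := Real.exp_one_lt_d9
    rw [show (2 : ℝ) = 1 + 1 by norm_num, Real.exp_add]
    nlinarith [Real.exp_pos 1]
  rw [← Finset.sum_range_id]
  have := key K
  have h : (K : ℝ) ^ (∑ k ∈ Finset.range K, k) ≤ 8 ^ (∑ k ∈ Finset.range K, k) *
        ((∏ k ∈ Finset.range K, k.factorial : ℕ) : ℝ) := this.trans (by gcongr)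
  exact_mod_cast h

theorem sum_range_card_le_sum (T : Finset ℕ) : ∑ i ∈ Finset.range T.card, i ≤ ∑ i ∈ T, i := by
  induction T using Finset.induction_on_max with
  | empty => simp
  | insert a s ha ih =>
    have hn : a ∉ s := fun h => lt_irrefl _ (ha a h)
    rw [Finset.card_insert_of_notMem hn, Finset.sum_range_succ, Finset.sum_insert hn]
    have : s.card ≤ a := by
      have := Finset.card_le_card (show s ⊆ Finset.range a from fun x hx => by simpa using ha x hx)
      simpa using this
    omega

/-- A lower bound for the sum of a family of weights that are pairwise distinct apart from those
at least as large as the size of the family. -/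
theorem sum_range_card_le_sum_of_injOn {ι : Type*} [Fintype ι] (w : ι → ℕ)
    (hw : ∀ i j, w i = w j → w i < Fintype.card ι → i = j) :
    ∑ i ∈ Finset.range (Fintype.card ι), i ≤ ∑ i, w i := by
  classical
  set N := Fintype.card ι
  set T := Finset.univ.filter fun i => w i < N
  set T' := Finset.univ.filter fun i => ¬ w i < N
  have hc : T.card + T'.card = N := Finset.card_filter_add_card_filter_not _
  have hs : ∑ i, w i = ∑ i ∈ T, w i + ∑ i ∈ T', w i :=
    (Finset.sum_filter_add_sum_filter_not _ _ _).symm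
  have h1 : ∑ i ∈ Finset.range T.card, i ≤ ∑ i ∈ T, w i := by
    have hinj : Set.InjOn w T := fun i hi j _ h => hw i j h (by simpa [T] using hi)
    have := sum_range_card_le_sum (T.image w)
    rwa [Finset.card_image_of_injOn hinj, Finset.sum_image hinj] at this
  have h2 : T'.card * N ≤ ∑ i ∈ T', w i := by
    rw [← smul_eq_mul]
    exact Finset.card_nsmul_le_sum _ _ _ fun i hi => by simpa [T'] using hi
  have h3 : ∑ i ∈ Finset.range (T.card + T'.card), i ≤
      ∑ i ∈ Finset.range T.card, i + T'.card * N := by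
    rw [Finset.sum_range_add]
    gcongr
    rw [← smul_eq_mul]
    conv_rhs => rw [← Finset.card_range T'.card]
    refine Finset.sum_le_card_nsmul _ _ _ fun i hi => ?_
    have := Finset.mem_range.mp hi
    omega
  rw [hc] at h3
  omega

/-- Interpolation determinants: if the rows of `M` are combinations of `π ^ j • B j`
for `j < E`, up to multiples of `π ^ E`, then `det M` is highly divisible by `π`. -/
theorem pow_dvd_det_of_expansion {R ι : Type*} [CommRing R] [Fintype ι] [DecidableEq ι]
    (π : R) (E : ℕ) (hE : Fintype.card ι ≤ E) (M : Matrix ι ι R)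
    (A : ι → ℕ → R) (B : ℕ → ι → R) (e : ι → ι → R)
    (hM : ∀ i ν, M i ν = ∑ j ∈ Finset.range E, π ^ j * A i j * B j ν + π ^ E * e i ν) :
    π ^ (∑ i ∈ Finset.range (Fintype.card ι), i) ∣ M.det := by
  classical
  let g : ι → Option (Fin E) → ι → R := fun i o => 
    o.elim (π ^ E • e i) fun j => π ^ (j : ℕ) • (A i j • B j)
  have hrow : M = fun i => ∑ o, g i o := by
    funext i ν
    rw [hM i ν, Finset.sum_apply, Fintype.sum_option, add_comm]
    simp only [g, Option.elim, Pi.smul_apply, smul_eq_mul]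
    rw [Finset.sum_range fun j => π ^ j * A i j * B j ν]
    simp only [mul_assoc]
  have hdet : M.det = ∑ φ : ι → Option (Fin E), Matrix.det (fun i => g i (φ i)) := by
    rw [hrow]
    exact (Matrix.detRowAlternating (n := ι) (R := R)).toMultilinearMap.map_sum g
  rw [hdet]
  refine Finset.dvd_sum fun φ _ => ?_
  let w : ι → ℕ := fun i => (φ i).elim E fun j => (j : ℕ)
  let c : ι → R := fun i => (φ i).elim 1 fun j => A i j
  let v : Matrix ι ι R := fun i => (φ i).elim (e i) fun j => B j
  have hg : (fun i => g i (φ i)) = Matrix.of fun i ν => (π ^ w i * c i) * v i ν := by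
    funext i ν
    simp only [g, w, v, c, Matrix.of_apply]
    cases φ i <;> simp [mul_assoc]
  rw [hg, Matrix.det_mul_column (fun i => π ^ w i * c i) v, Finset.prod_mul_distrib,
    Finset.prod_pow_eq_pow_sum]
  by_cases hinj : ∀ i j, w i = w j → w i < Fintype.card ι → i = j
  · exact ((pow_dvd_pow _ (sum_range_card_le_sum_of_injOn w hinj)).mul_right _).mul_right _
  · push Not at hinj
    obtain ⟨i, j, hij, hlt, hne⟩ := hinj
    have hv : v i = v j := by
      have hlt' := hij ▸ hlt
      simp only [w] at hij hlt hlt'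
      simp only [v]
      cases hi : φ i <;> cases hj : φ j <;> simp only [hi, hj, Option.elim] at hij hlt hlt' ⊢
      all_goals first | omega | rw [hij]
    rw [Matrix.det_zero_of_row_eq hne hv, mul_zero]
    exact dvd_zero _

open Polynomial in
theorem coeff_prod_sum_of_natDegree_le {R ι : Type*} [CommSemiring R] (s : Finset ι)
    (f : ι → R[X]) (n : ι → ℕ) (h : ∀ i ∈ s, (f i).natDegree ≤ n i) :
    (∏ i ∈ s, f i).coeff (∑ i ∈ s, n i) = ∏ i ∈ s, (f i).coeff (n i) := by
  classical
  induction s using Finset.induction_on with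
  | empty => simp
  | insert a s ha ih =>
    have hs : ∀ i ∈ s, (f i).natDegree ≤ n i := fun i hi => h i (Finset.mem_insert_of_mem hi)
    rw [Finset.prod_insert ha, Finset.sum_insert ha, Finset.prod_insert ha, ← ih hs]
    exact coeff_mul_add_eq_of_natDegree_le (h a (Finset.mem_insert_self _ _))
      ((natDegree_prod_le _ _).trans (Finset.sum_le_sum hs))

open Polynomial in
theorem coeff_det_sum_of_natDegree_le {R ι : Type*} [CommRing R] [Fintype ι] [DecidableEq ι]
    (Q : Matrix ι ι R[X]) (n : ι → ℕ) (h : ∀ i l, (Q i l).natDegree ≤ n l) :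
    Q.det.coeff (∑ l, n l) = Matrix.det (Matrix.of fun i l => (Q i l).coeff (n l)) := by
  rw [Matrix.det_apply, Matrix.det_apply, finsetSum_coeff]
  refine Finset.sum_congr rfl fun σ _ => ?_
  rw [coeff_smul, coeff_prod_sum_of_natDegree_le _ _ _ fun i _ => h _ _]
  simp

open Polynomial in
theorem natDegree_det_le_sum {R ι : Type*} [CommRing R] [Fintype ι] [DecidableEq ι]
    (Q : Matrix ι ι R[X]) (n : ι → ℕ) (h : ∀ i l, (Q i l).natDegree ≤ n l) :
    Q.det.natDegree ≤ ∑ l, n l := by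
  rw [Matrix.det_apply]
  refine natDegree_sum_le_of_forall_le _ _ fun σ _ => ?_
  exact (natDegree_smul_le _ _).trans
    ((natDegree_prod_le _ _).trans (Finset.sum_le_sum fun i _ => h _ _))

open Polynomial in
/-- A zero estimate for polynomials in `z` and `y` evaluated along shifts
`(z, y) ↦ (z + r, w ^ r * y)`. -/
theorem eq_zero_of_many_zeros {F : Type*} [Field F] [CharZero F] {K L : ℕ} (w : F)
    (hw : Function.Injective fun l : ℕ => w ^ l) (T : Finset (ℕ × F))
    (hT : Set.InjOn Prod.fst (T : Set (ℕ × F))) (hy : ∀ x ∈ T, x.2 ≠ 0)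
    (hcard : L * (K - 1) < T.card) (u : Fin K → Fin L → F)
    (h : ∀ x ∈ T, ∀ r < L,
      ∑ l : Fin L, ∑ k : Fin K, u k l * ((x.1 + r).choose k : F) * (w ^ r * x.2) ^ (l : ℕ) = 0) :
    u = 0 := by
  classical
  let P : Fin L → F[X] := fun l => ∑ k : Fin K, C (u k l / (k : ℕ).factorial) * descPochhammer F k
  have hPeval : ∀ l (n : ℕ), (P l).eval (n : F) = ∑ k : Fin K, u k l * (n.choose k : F) := by
    intro l n
    simp only [P, eval_finsetSum, eval_mul, eval_C]
    refine Finset.sum_congr rfl fun k _ => ?_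
    have hk : ((k : ℕ).factorial : F) ≠ 0 := by exact_mod_cast Nat.factorial_ne_zero _
    rw [descPochhammer_eval_eq_descFactorial, Nat.descFactorial_eq_factorial_mul_choose]
    push_cast
    field_simp
  have hPdeg : ∀ l, (P l).natDegree ≤ K - 1 := by
    intro l
    refine natDegree_sum_le_of_forall_le _ _ fun k _ => ?_
    refine (natDegree_C_mul_le _ _).trans ?_
    rw [descPochhammer_natDegree]
    omega
  have hPzero : ∀ l, P l = 0 → ∀ k, u k l = 0 := by
    intro l hl
    have hu : ∀ n : ℕ, ∀ hn : n < K, u ⟨n, hn⟩ l = 0 := by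
      intro n
      induction n using Nat.strong_induction_on with
      | _ n ih =>
        intro hn
        have h1 := hPeval l n
        rw [hl, eval_zero, Finset.sum_eq_single ⟨n, hn⟩] at h1
        · simpa using h1.symm
        · intro k _ hk
          rcases lt_trichotomy (k : ℕ) n with hlt | heq | hgt
          · rw [ih k hlt k.2, zero_mul]
          · exact absurd (Fin.ext heq) hk
          · rw [Nat.choose_eq_zero_of_lt hgt, Nat.cast_zero, mul_zero]
        · simp
    exact fun k => hu k k.2
  let ι := {l : Fin L // P l ≠ 0}
  by_cases hι : Nonempty ι
  swap
  · funext k l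
    refine hPzero l ?_ k
    by_contra hl
    exact hι ⟨⟨l, hl⟩⟩
  exfalso
  have hmL : Fintype.card ι ≤ L :=
    (Fintype.card_subtype_le fun l : Fin L => P l ≠ 0).trans_eq (Fintype.card_fin L)
  let e : ι ≃ Fin (Fintype.card ι) := Fintype.equivFin ι
  let Q : Matrix ι ι F[X] := Matrix.of fun i l =>
    (P l).comp (X + C ((e i : ℕ) : F)) * C ((w ^ ((l : Fin L) : ℕ)) ^ (e i : ℕ))
  have hQdeg : ∀ i l : ι, (Q i l).natDegree ≤ (P l).natDegree := by
    intro i l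
    simp only [Q, Matrix.of_apply]
    refine (natDegree_mul_C_le _ _).trans ?_
    rw [natDegree_comp, natDegree_X_add_C, mul_one]
  have hQcoeff : ∀ i l : ι, (Q i l).coeff (P l).natDegree =
      (P l).leadingCoeff * (w ^ ((l : Fin L) : ℕ)) ^ (e i : ℕ) := by
    intro i l
    have h1 : ((P l).comp (X + C ((e i : ℕ) : F))).natDegree = (P l).natDegree := by
      rw [natDegree_comp, natDegree_X_add_C, mul_one]
    simp only [Q, Matrix.of_apply, coeff_mul_C]
    rw [← h1, coeff_natDegree, leadingCoeff_comp (by rw [natDegree_X_add_C]; exact one_ne_zero),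
      leadingCoeff_X_add_C, one_pow, mul_one]
  have hdet : Q.det ≠ 0 := by
    intro h0
    have h1 := coeff_det_sum_of_natDegree_le Q (fun l => (P l).natDegree) hQdeg
    rw [h0, coeff_zero] at h1
    have h2 : (Matrix.of fun i l : ι => (Q i l).coeff (P l).natDegree) =
        Matrix.of fun i l : ι => (P l).leadingCoeff *
          (((Matrix.vandermonde fun j => w ^ (((e.symm j : ι) : Fin L) : ℕ)).submatrix e e).transpose
            i l) := by
      ext i l
      simp only [Matrix.of_apply, hQcoeff, Matrix.transpose_apply, Matrix.submatrix_apply,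
        Matrix.vandermonde_apply, Equiv.symm_apply_apply]
    rw [h2, Matrix.det_mul_row (fun l : ι => (P l).leadingCoeff), Matrix.det_transpose,
      Matrix.det_submatrix_equiv_self] at h1
    rcases mul_eq_zero.mp h1.symm with h3 | h3
    · obtain ⟨l, _, hl⟩ := Finset.prod_eq_zero_iff.mp h3
      exact l.2 (leadingCoeff_eq_zero.mp hl)
    · refine Matrix.det_vandermonde_ne_zero_iff.mpr ?_ h3
      intro a b hab
      have := hw hab
      exact e.symm.injective (Subtype.ext (Fin.ext this))
  have hQnat : Q.det.natDegree ≤ L * (K - 1) := by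
    refine (natDegree_det_le_sum Q (fun l => (P l).natDegree) hQdeg).trans ?_
    refine (Finset.sum_le_card_nsmul Finset.univ (fun l : ι => (P l).natDegree) (K - 1)
      fun l _ => hPdeg l).trans ?_
    rw [smul_eq_mul, Finset.card_univ]
    gcongr
  have hroot : ∀ x ∈ T, Q.det.eval (x.1 : F) = 0 := by
    intro x hx
    rw [← coe_evalRingHom, RingHom.map_det, ← Matrix.exists_mulVec_eq_zero_iff]
    refine ⟨fun l => x.2 ^ ((l : Fin L) : ℕ), ?_, ?_⟩
    · obtain ⟨l⟩ := hι
      intro h0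
      exact pow_ne_zero _ (hy x hx) (congrFun h0 l)
    · funext i
      have h1 := h x hx (e i) (lt_of_lt_of_le (e i).2 hmL)
      have h2 : ∀ l : Fin L, ∑ k : Fin K, u k l * ((x.1 + (e i : ℕ)).choose k : F) *
          (w ^ (e i : ℕ) * x.2) ^ (l : ℕ) =
          (P l).eval ((x.1 : F) + (e i : ℕ)) * (w ^ (l : ℕ)) ^ (e i : ℕ) * x.2 ^ (l : ℕ) := by
        intro l
        rw [← Nat.cast_add, hPeval, mul_pow, ← pow_mul, ← pow_mul, mul_comm (e i : ℕ),
          ← Finset.sum_mul, mul_assoc]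
      rw [Finset.sum_congr rfl fun l _ => h2 l] at h1
      rw [Pi.zero_apply, ← h1, ← Finset.sum_filter_of_ne (p := fun l => P l ≠ 0), Finset.sum_subtype
        (p := fun l => P l ≠ 0) _ (by simp)]
      · simp only [Matrix.mulVec, dotProduct, RingHom.mapMatrix_apply, Matrix.map_apply, Q,
          Matrix.of_apply, coe_evalRingHom, eval_mul, eval_comp, eval_add, eval_X, eval_C]
        rfl
      · intro l _ hl h0
        simp [h0] at hl
  refine hdet (eq_zero_of_natDegree_lt_card_of_eval_eq_zero' Q.det
    (T.image fun x => (x.1 : F)) ?_ ?_)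
  · intro a ha
    obtain ⟨x, hx, rfl⟩ := Finset.mem_image.mp ha
    exact hroot x hx
  · rw [Finset.card_image_of_injOn]
    · omega
    · intro x hx y hy' hxy
      exact hT hx hy' (Nat.cast_injective hxy)

theorem exists_det_ne_zero {F ι P : Type*} [Field F] [Fintype ι] [DecidableEq ι]
    (M : ι → P → F) (h : ∀ u : ι → F, (∀ ν, ∑ i, u i * M i ν = 0) → u = 0) :
    ∃ f : ι → P, (Matrix.of fun i j => M i (f j)).det ≠ 0 := by
  classical
  let v : P → ι → F := fun ν i => M i ν
  have hspan : Submodule.span F (Set.range v) = ⊤ := by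
    by_contra hne
    obtain ⟨f, hf0, hf⟩ := Submodule.exists_le_ker_of_lt_top _ (lt_top_iff_ne_top.mpr hne)
    refine hf0 ?_
    have h0 := h (fun i => f (Pi.single i 1)) fun ν => by
      have : f (v ν) = 0 := hf (Submodule.subset_span ⟨ν, rfl⟩)
      rw [← this, LinearMap.pi_apply_eq_sum_univ f (v ν)]
      refine Finset.sum_congr rfl fun i _ => ?_
      rw [smul_eq_mul, mul_comm]
      congr 2
      funext j
      simp [Pi.single_apply, eq_comm]
    refine LinearMap.pi_ext' fun i => LinearMap.ext_ring ?_
    simpa using congrFun h0 i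
  obtain ⟨b, hb, hbs, hbl⟩ := exists_linearIndependent F (Set.range v)
  rw [hspan] at hbs
  let B : Module.Basis b F (ι → F) := Module.Basis.mk hbl (by rw [Subtype.range_coe, hbs])
  let e : ι ≃ b := (Pi.basisFun F ι).indexEquiv B
  choose f hf using fun j : ι => hb (e j).2
  refine ⟨f, ?_⟩
  have hli : LinearIndependent F (fun j : ι => v (f j)) := by
    have hfe : (fun j : ι => v (f j)) = Subtype.val ∘ e := funext hf
    rw [hfe]
    exact hbl.comp e e.injective
  have := (Matrix.linearIndependent_rows_iff_isUnit (A := Matrix.of fun j i => M i (f j))).mp hli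
  rw [Matrix.isUnit_iff_isUnit_det, isUnit_iff_ne_zero, ← Matrix.det_transpose] at this
  exact this

theorem exists_choose_mul_pow_expansion {R : Type*} [CommRing R] (π h : R) (k z E : ℕ) :
    ∃ e : R, π ^ k * (z.choose k : R) * (1 + π * h) ^ z =
      ∑ j ∈ Finset.range E,
        π ^ j * ((1 + π * h) ^ k * (j.choose k : R) * h ^ (j - k)) * (z.choose j : R) +
      π ^ E * e := by
  set g : ℕ → R := fun j =>
    π ^ j * ((1 + π * h) ^ k * (j.choose k : R) * h ^ (j - k)) * (z.choose j : R) with hg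
  have hfull : π ^ k * (z.choose k : R) * (1 + π * h) ^ z = ∑ j ∈ Finset.range (z + 1), g j := by
    rcases lt_or_ge z k with hzk | hzk
    · rw [Nat.choose_eq_zero_of_lt hzk, Finset.sum_eq_zero]
      · simp
      · intro j hj
        have : j < k := (Finset.mem_range_succ_iff.mp hj).trans_lt hzk
        simp [hg, Nat.choose_eq_zero_of_lt this]
    · obtain ⟨d, rfl⟩ := Nat.exists_eq_add_of_le hzk
      rw [add_assoc, Finset.sum_range_add, Finset.sum_eq_zero, zero_add, pow_add,
        add_comm (1 : R) (π * h), add_pow (π * h) 1 d, Finset.mul_sum, Finset.mul_sum]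
      · refine Finset.sum_congr rfl fun i hi => ?_
        have h1 := Nat.choose_mul (n := k + d) (k := k + i) (s := k)
          (by omega)
        simp only [Nat.add_sub_cancel_left] at h1
        have h2 : ((k + d).choose (k + i) : R) * ((k + i).choose k : R) =
            ((k + d).choose k : R) * (d.choose i : R) := by
          rw [← Nat.cast_mul, h1, Nat.cast_mul]
        simp only [hg, Nat.add_sub_cancel_left, one_pow, mul_one, mul_pow, pow_add]
        linear_combination (-(π ^ k * π ^ i * h ^ i * (1 + π * h) ^ k)) * h2
      · intro j hj
        simp [hg, Nat.choose_eq_zero_of_lt (Finset.mem_range.mp hj)]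
  have hext : ∑ j ∈ Finset.range (z + 1), g j = ∑ j ∈ Finset.range (E + (z + 1)), g j := by
    refine Finset.sum_subset (Finset.range_mono (by omega)) fun j _ hj => ?_
    have : z < j := by simpa [Nat.lt_succ_iff] using hj
    simp [hg, Nat.choose_eq_zero_of_lt this]
  rw [hfull, hext, Finset.sum_range_add]
  refine ⟨∑ i ∈ Finset.range (z + 1), π ^ i *
    ((1 + π * h) ^ k * ((E + i).choose k : R) * h ^ (E + i - k)) * (z.choose (E + i) : R), ?_⟩
  rw [Finset.mul_sum]
  congr 1
  refine Finset.sum_congr rfl fun i _ => ?_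
  simp only [hg, pow_add]
  ring

theorem pow_dvd_pow_mul_det_choose {R : Type*} [CommRing R] (π : R) (K L E : ℕ) (hE : K * L ≤ E)
    (h : Fin L → R) (z : Fin K × Fin L → ℕ) (Y : Fin K × Fin L → R)
    (hY : ∀ ν (l : Fin L), π ^ E ∣ Y ν ^ (l : ℕ) - (1 + π * h l) ^ z ν) :
    π ^ (∑ i ∈ Finset.range (K * L), i) ∣ π ^ (L * ∑ k ∈ Finset.range K, k) *
      (Matrix.of fun i ν : Fin K × Fin L =>
        ((z ν).choose (i.1 : ℕ) : R) * Y ν ^ (i.2 : ℕ)).det := by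
  choose d hd using hY
  choose e he using fun (i : Fin K × Fin L) ν =>
    exists_choose_mul_pow_expansion π (h i.2) (i.1 : ℕ) (z ν) E
  have h1 := pow_dvd_det_of_expansion π E (by simpa using hE)
    (Matrix.of fun i ν : Fin K × Fin L =>
      π ^ (i.1 : ℕ) * ((z ν).choose (i.1 : ℕ) * Y ν ^ (i.2 : ℕ)))
    (fun i j => (1 + π * h i.2) ^ (i.1 : ℕ) * (j.choose (i.1 : ℕ) : R) * h i.2 ^ (j - (i.1 : ℕ)))
    (fun j ν => ((z ν).choose j : R))
    (fun i ν => e i ν + π ^ (i.1 : ℕ) * ((z ν).choose (i.1 : ℕ) : R) * d ν i.2) ?_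
  · have h2 := Matrix.det_mul_column (fun i : Fin K × Fin L => π ^ (i.1 : ℕ))
      (Matrix.of fun i ν : Fin K × Fin L =>
        ((z ν).choose (i.1 : ℕ) : R) * Y ν ^ (i.2 : ℕ))
    simp only [Matrix.of_apply] at h2
    rw [h2, Finset.prod_pow_eq_pow_sum, Fintype.sum_prod_type] at h1
    have h3 : ∑ k : Fin K, ∑ _l : Fin L, (k : ℕ) = L * ∑ k ∈ Finset.range K, k := by
      rw [← Fin.sum_univ_eq_sum_range (fun k => k) K, Finset.mul_sum]
      simp
    rw [h3] at h1
    simpa using h1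
  · intro i ν
    have h3 := he i ν
    have h4 := hd ν i.2
    rw [Matrix.of_apply]
    linear_combination h3 + π ^ (i.1 : ℕ) * ((z ν).choose (i.1 : ℕ) : R) * h4

/-- A prime `p` not dividing `2 * a` splits in `ℤ√(-D)` when `a ^ 2 + D` is a power of `p`. -/
theorem exists_zsqrtd_hom_padicInt {p : ℕ} [Fact p.Prime] (t : ℕ) (ht : t ≠ 0) (D a : ℤ)
    (h : a ^ 2 + D = (p : ℤ) ^ t) (hpa : ¬ (p : ℤ) ∣ 2 * a) :
    ∃ φ : ℤ√(-D) →+* ℤ_[p], IsUnit (φ ⟨a, 1⟩) := by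
  let F : Polynomial ℤ_[p] := Polynomial.X ^ 2 + Polynomial.C (D : ℤ_[p])
  have hder' : F.derivative.eval (a : ℤ_[p]) = ((2 * a : ℤ) : ℤ_[p]) := by
    simp only [F, Polynomial.derivative_add, Polynomial.derivative_X_pow, Polynomial.derivative_C,
      add_zero, Polynomial.eval_mul, Polynomial.eval_C, Polynomial.eval_pow, Polynomial.eval_X]
    push_cast
    ring
  have hder : ‖F.derivative.eval (a : ℤ_[p])‖ = 1 := by
    rw [hder']
    refine le_antisymm (PadicInt.norm_le_one _) (not_lt.mp fun hlt => hpa ?_)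
    exact PadicInt.norm_int_lt_one_iff_dvd _ |>.mp hlt
  have hval : F.eval (a : ℤ_[p]) = (p : ℤ_[p]) ^ t := by
    simp only [F, Polynomial.eval_add, Polynomial.eval_pow, Polynomial.eval_X, Polynomial.eval_C]
    exact_mod_cast congrArg (fun x : ℤ => (x : ℤ_[p])) h
  obtain ⟨x, hx, hxa, -, -⟩ := hensels_lemma (p := p) (F := F) (a := (a : ℤ_[p])) (by
    simp only [Polynomial.coe_aeval_eq_eval]
    rw [hder, hval, norm_pow, one_pow]
    exact pow_lt_one₀ (norm_nonneg _) (PadicInt.norm_int_lt_one_iff_dvd (p : ℤ) |>.mpr dvd_rfl) ht)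
  simp only [Polynomial.coe_aeval_eq_eval, hder] at hxa
  have hx2 : x * x = ((-D : ℤ) : ℤ_[p]) := by
    have : x ^ 2 + (D : ℤ_[p]) = 0 := by simpa [F] using hx
    push_cast
    linear_combination this
  refine ⟨Zsqrtd.lift ⟨x, hx2⟩, ?_⟩
  rw [PadicInt.isUnit_iff]
  have h1 : (Zsqrtd.lift ⟨x, hx2⟩ (⟨a, 1⟩ : ℤ√(-D)) : ℤ_[p]) = (x - a) + ((2 * a : ℤ) : ℤ_[p]) := by
    simp [Zsqrtd.lift]
    ring
  have h2 : ‖((2 * a : ℤ) : ℤ_[p])‖ = 1 := by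
    rw [← hder', hder]
  rw [h1, PadicInt.norm_add_eq_max_of_ne (by rw [h2]; exact hxa.ne), h2]
  exact max_eq_right hxa.le

theorem PadicInt.exists_pow_sub_one_eq {p : ℕ} [hp : Fact p.Prime] (x : ℤ_[p]) (hx : IsUnit x) :
    ∃ h : ℤ_[p], x ^ (p - 1) = 1 + p * h := by
  have h1 : PadicInt.toZMod (x ^ (p - 1) - 1) = 0 := by
    rw [map_sub, map_pow, map_one, ZMod.pow_card_sub_one_eq_one (hx.map _).ne_zero, sub_self]
  rw [← RingHom.mem_ker, PadicInt.ker_toZMod, PadicInt.maximalIdeal_eq_span_p,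
    Ideal.mem_span_singleton] at h1
  obtain ⟨h, hh⟩ := h1
  exact ⟨h, by rw [← hh]; ring⟩

/-- Arithmetic lower bound for the interpolation determinant. -/
theorem pow_dvd_pow_mul_norm_det {p : ℕ} (hp : p.Prime) (t : ℕ) (ht : t ≠ 0) (D a : ℤ)
    (h : a ^ 2 + D = (p : ℤ) ^ t) (hpa : ¬ (p : ℤ) ∣ 2 * a) (l : ℕ) (c : ℤ)
    (hc : (⟨a, 1⟩ : ℤ√(-D)) ^ l + star (⟨a, 1⟩ : ℤ√(-D)) ^ l = (c : ℤ√(-D)))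
    (K L : ℕ) (hKL : K * L ≤ t * l) (z A B : Fin K × Fin L → ℕ)
    (hz : ∀ ν, (p - 1) * z ν = A ν + l * B ν) :
    (p : ℤ) ^ (∑ i ∈ Finset.range (K * L), i) ∣ (p : ℤ) ^ (L * ∑ k ∈ Finset.range K, k) *
      (Matrix.of fun i ν : Fin K × Fin L => (((z ν).choose (i.1 : ℕ) : ℕ) : ℤ√(-D)) *
        ((⟨a, 1⟩ : ℤ√(-D)) ^ A ν * (c : ℤ√(-D)) ^ B ν) ^ (i.2 : ℕ)).det.norm := by
  have := Fact.mk hp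
  obtain ⟨φ, hφ⟩ := exists_zsqrtd_hom_padicInt (p := p) t ht D a h hpa
  set β : ℤ√(-D) := ⟨a, 1⟩ with hβ
  set Δ := (Matrix.of fun i ν : Fin K × Fin L => (((z ν).choose (i.1 : ℕ) : ℕ) : ℤ√(-D)) *
        (β ^ A ν * (c : ℤ√(-D)) ^ B ν) ^ (i.2 : ℕ)).det with hΔ
  obtain ⟨g, hg⟩ := PadicInt.exists_pow_sub_one_eq (φ β) hφ
  have hstar : (p : ℤ_[p]) ^ t ∣ φ (star β) := by
    have h1 : φ β * φ (star β) = (p : ℤ_[p]) ^ t := by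
      rw [← map_mul, ← Zsqrtd.norm_eq_mul_conj]
      have : β.norm = (p : ℤ) ^ t := by rw [← h, Zsqrtd.norm_def]; simp [hβ]; ring
      rw [this]; simp
    exact (hφ.dvd_mul_left).mp h1.symm.dvd
  have hcφ : (p : ℤ_[p]) ^ (t * l) ∣ (c : ℤ_[p]) - φ β ^ l := by
    have h1 := congrArg φ hc
    rw [map_add, map_pow, map_pow, map_intCast] at h1
    rw [← h1, add_sub_cancel_left, pow_mul]
    exact pow_dvd_pow_of_dvd hstar l
  have hgl : ∀ j : Fin L, ∃ x, (1 + (p : ℤ_[p]) * g) ^ (j : ℕ) = 1 + p * x := fun j => by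
    obtain ⟨x, hx⟩ : (p : ℤ_[p]) ∣ (1 + (p : ℤ_[p]) * g) ^ (j : ℕ) - 1 := by
      have := sub_dvd_pow_sub_pow (1 + (p : ℤ_[p]) * g) 1 (j : ℕ)
      rw [one_pow, add_sub_cancel_left] at this
      exact (dvd_mul_right _ _).trans this
    exact ⟨x, by rw [← hx]; ring⟩
  choose gl hgl using hgl
  have key := pow_dvd_pow_mul_det_choose (p : ℤ_[p]) K L (t * l) hKL gl z
    (fun ν => φ β ^ A ν * (c : ℤ_[p]) ^ B ν) (fun ν j => by
      rw [← hgl, ← hg, ← pow_mul, ← pow_mul,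
        show (p - 1) * ((j : ℕ) * z ν) = ((p - 1) * z ν) * j by ring, hz ν, pow_mul (φ β), pow_add, pow_mul (φ β)]
      refine dvd_trans ?_ (sub_dvd_pow_sub_pow _ _ _)
      rw [← mul_sub]
      exact Dvd.dvd.mul_left (hcφ.trans (sub_dvd_pow_sub_pow _ _ _)) _)
  have hdet : φ Δ = (Matrix.of fun i ν : Fin K × Fin L => ((z ν).choose (i.1 : ℕ) : ℤ_[p]) *
      (φ β ^ A ν * (c : ℤ_[p]) ^ B ν) ^ (i.2 : ℕ)).det := by
    rw [hΔ, RingHom.map_det]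
    congr 1
    ext i ν
    simp
  rw [← hdet] at key
  have key2 := key.mul_right (φ (star Δ))
  rw [mul_assoc, ← map_mul, ← Zsqrtd.norm_eq_mul_conj, map_intCast] at key2
  have key3 := (PadicInt.pow_p_dvd_int_iff (p := p) (∑ i ∈ Finset.range (K * L), i)
    ((p : ℤ) ^ (L * ∑ k ∈ Finset.range K, k) * Δ.norm)).mp (by push_cast; exact key2)
  exact_mod_cast key3

theorem norm_det_le_factorial_mul_prod {ι : Type*} [Fintype ι] [DecidableEq ι] (M : Matrix ι ι ℂ)
    (b : ι → ℝ) (h : ∀ i j, ‖M i j‖ ≤ b i) :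
    ‖M.det‖ ≤ (Fintype.card ι).factorial * ∏ i, b i := by
  rw [← Matrix.det_transpose, Matrix.det_apply]
  refine (norm_sum_le _ _).trans ?_
  refine (Finset.sum_le_card_nsmul _ _ (∏ i, b i) fun σ _ => ?_).trans ?_
  · have h1 : ‖Equiv.Perm.sign σ • ∏ i, M.transpose (σ i) i‖ = ∏ i, ‖M i (σ i)‖ := by
      rcases Int.units_eq_one_or (Equiv.Perm.sign σ) with hs | hs <;>
        simp [hs, Matrix.transpose_apply]
    rw [h1]
    exact Finset.prod_le_prod (fun _ _ => norm_nonneg _) fun i _ => h i _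
  · rw [Finset.card_univ, Fintype.card_perm, nsmul_eq_mul]

theorem pow_sum_range_le_of_mul_le {K Z q : ℕ} (h : 8 * Z ≤ K * q) :
    Z ^ (∑ k ∈ Finset.range K, k) ≤
      q ^ (∑ k ∈ Finset.range K, k) * ∏ k ∈ Finset.range K, k.factorial := by
  rw [Finset.sum_range_id]
  set s := K * (K - 1) / 2
  have h1 : (8 * Z) ^ s ≤ (K * q) ^ s := by gcongr
  rw [mul_pow, mul_pow] at h1
  refine Nat.le_of_mul_le_mul_left (h1.trans ?_) (show 0 < 8 ^ s by positivity)
  refine (Nat.mul_le_mul_right _ (pow_div_le_pow_mul_prod_factorial K)).trans_eq ?_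
  ring

theorem prod_pow_div_factorial_le {K Z q : ℕ} (h : 8 * Z ≤ K * q) :
    ∏ k ∈ Finset.range K, ((Z : ℝ) ^ k / k.factorial) ≤ (q : ℝ) ^ (∑ k ∈ Finset.range K, k) := by
  rw [Finset.prod_div_distrib, Finset.prod_pow_eq_pow_sum, div_le_iff₀]
  · exact_mod_cast pow_sum_range_le_of_mul_le h
  · exact Finset.prod_pos fun k _ => by exact_mod_cast Nat.factorial_pos k

/-- Analytic upper bound for the interpolation determinant. -/
theorem norm_det_choose_le {K L Z q : ℕ} (hZ : 8 * Z ≤ K * q) (G : ℝ) (hG : 0 ≤ G)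
    (z : Fin K × Fin L → ℕ) (Y : Fin K × Fin L → ℂ) (hz : ∀ ν, z ν ≤ Z) (hY : ∀ ν, ‖Y ν‖ ≤ G) :
    ‖(Matrix.of fun i ν : Fin K × Fin L =>
        ((z ν).choose (i.1 : ℕ) : ℂ) * Y ν ^ (i.2 : ℕ)).det‖ ≤
      (K * L).factorial * (((q : ℝ) ^ (∑ k ∈ Finset.range K, k)) ^ L *
        (G ^ (∑ l ∈ Finset.range L, l)) ^ K) := by
  refine (norm_det_le_factorial_mul_prod _
    (fun i => (Z : ℝ) ^ (i.1 : ℕ) / (i.1 : ℕ).factorial * G ^ (i.2 : ℕ)) ?_).trans ?_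
  · intro i ν
    rw [Matrix.of_apply, norm_mul, norm_pow, Complex.norm_natCast]
    gcongr
    · refine (Nat.choose_le_pow_div _ _).trans ?_
      gcongr
      exact hz ν
    · exact hY ν
  · rw [Fintype.card_prod, Fintype.card_fin, Fintype.card_fin]
    gcongr
    rw [Finset.prod_mul_distrib, Fintype.prod_prod_type, Fintype.prod_prod_type_right]
    simp only [Finset.prod_const, Finset.card_univ, Fintype.card_fin]
    rw [Finset.prod_pow, Finset.prod_pow, Fin.prod_univ_eq_prod_range (fun k : ℕ => (Z : ℝ) ^ k / k.factorial),
      Fin.prod_univ_eq_prod_range (fun l : ℕ => G ^ l), Finset.prod_pow_eq_pow_sum _ _ G]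
    gcongr
    exact prod_pow_div_factorial_le hZ

theorem exists_zsqrtd_hom_complex {D : ℤ} (hD : 0 < D) :
    ∃ ψ : ℤ√(-D) →+* ℂ, ∀ x, ‖ψ x‖ ^ 2 = (x.norm : ℝ) := by
  have hr : (Complex.I * Real.sqrt D) * (Complex.I * Real.sqrt D) = ((-D : ℤ) : ℂ) := by
    have h1 : ((Real.sqrt D : ℝ) : ℂ) * (Real.sqrt D : ℝ) = (D : ℂ) := by
      rw [← Complex.ofReal_mul, Real.mul_self_sqrt (by exact_mod_cast hD.le)]
      simp
    push_cast
    linear_combination (-1 : ℂ) * h1 + ((Real.sqrt D : ℝ) : ℂ) ^ 2 * Complex.I_mul_I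
  refine ⟨Zsqrtd.lift ⟨_, hr⟩, fun x => ?_⟩
  have h2 : (Zsqrtd.lift ⟨_, hr⟩ x : ℂ) = ((x.re : ℝ) : ℂ) + ((x.im * Real.sqrt D : ℝ) : ℂ) * Complex.I := by
    simp [Zsqrtd.lift]
    ring
  rw [h2, ← Complex.normSq_eq_norm_sq, Complex.normSq_add_mul_I, mul_pow,
    Real.sq_sqrt (by exact_mod_cast hD.le), Zsqrtd.norm_def]
  push_cast
  ring

/-- Nonvanishing of the interpolation determinant for the points
`(A, B) = ((p - 1) * r + ((p - 2) * l * s) % (p - 1), s)`. -/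
theorem exists_interpolation_det_ne_zero {m l K L ρ S : ℕ} (hm : 0 < m) (hρ : m * ρ ≤ l)
    (hcard : L * (K - 1) < ρ * S) (β c : ℂ) (hβ : 1 < ‖β‖) (hc : c ≠ 0) :
    ∃ z A B : Fin K × Fin L → ℕ, (∀ ν, m * z ν = A ν + l * B ν) ∧
      (∀ ν, A ν ≤ m * (ρ + L)) ∧ (∀ ν, B ν < S) ∧
      (Matrix.of fun i ν : Fin K × Fin L => ((z ν).choose (i.1 : ℕ) : ℂ) *
        (β ^ A ν * c ^ B ν) ^ (i.2 : ℕ)).det ≠ 0 := by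
  classical
  let a0 : ℕ → ℕ := fun s => ((m - 1) * l * s) % m
  have ha0 : ∀ s, a0 s < m := fun s => Nat.mod_lt _ hm
  have hdvd : ∀ r s, m ∣ m * r + a0 s + l * s := fun r s => by
    have h1 : m ∣ (m - 1) * l * s + l * s := by
      obtain ⟨j, rfl⟩ := Nat.exists_eq_succ_of_ne_zero hm.ne'
      exact ⟨l * s, by rw [Nat.succ_sub_one, Nat.succ_eq_add_one]; ring⟩
    rw [add_assoc]
    refine dvd_add (dvd_mul_right _ _) ?_
    rw [Nat.dvd_iff_mod_eq_zero] at h1 ⊢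
    simpa [a0, Nat.add_mod] using h1
  let zf : ℕ → ℕ → ℕ := fun r s => (m * r + a0 s + l * s) / m
  have hzf : ∀ r s, m * zf r s = m * r + a0 s + l * s := fun r s => Nat.mul_div_cancel' (hdvd r s)
  have hzadd : ∀ r r' s, zf (r + r') s = zf r s + r' := fun r r' s => by
    apply Nat.eq_of_mul_eq_mul_left hm
    rw [mul_add, hzf, hzf]; ring
  let Yf : ℕ → ℕ → ℂ := fun r s => β ^ (m * r + a0 s) * c ^ s
  have hYadd : ∀ r r' s, Yf (r + r') s = (β ^ m) ^ r' * Yf r s := fun r r' s => by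
    simp only [Yf, ← pow_mul, mul_add, pow_add]; ring
  have hβ0 : β ≠ 0 := norm_pos_iff.mp (by linarith)
  have hinj : ∀ r s r' s', r < ρ → r' < ρ → zf r s = zf r' s' → r = r' ∧ s = s' := by
    intro r s r' s' hr hr' hz
    have h1 := hzf r s
    rw [hz, hzf r' s'] at h1
    have hlt : ∀ r s, r < ρ → m * r + a0 s < l := fun r s hr => by
      have := ha0 s
      have h3 : m * (r + 1) ≤ m * ρ := Nat.mul_le_mul_left _ hr
      rw [mul_add, mul_one] at h3
      omega
    have hs : s' = s := by
      have h4 := congrArg (· / l) h1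
      beta_reduce at h4
      rwa [Nat.add_mul_div_left _ _ (by have := hlt r s hr; omega),
        Nat.add_mul_div_left _ _ (by have := hlt r s hr; omega), Nat.div_eq_of_lt (hlt _ _ hr'),
        Nat.div_eq_of_lt (hlt _ _ hr), zero_add, zero_add] at h4
    subst hs
    refine ⟨Nat.eq_of_mul_eq_mul_left hm ?_, rfl⟩
    omega
  obtain ⟨f, hf⟩ := exists_det_ne_zero
    (fun (i : Fin K × Fin L) (x : Fin (ρ + L) × Fin S) =>
      ((zf x.1 x.2).choose (i.1 : ℕ) : ℂ) * Yf x.1 x.2 ^ (i.2 : ℕ)) (by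
    intro u hu
    let T : Finset (ℕ × ℂ) := (Finset.range ρ ×ˢ Finset.range S).image
      fun x => (zf x.1 x.2, Yf x.1 x.2)
    have hTcard : T.card = ρ * S := by
      rw [Finset.card_image_of_injOn, Finset.card_product, Finset.card_range, Finset.card_range]
      rintro ⟨r, s⟩ h1 ⟨r', s'⟩ h2 h3
      simp only [Finset.coe_product, Set.mem_prod, Finset.coe_range, Set.mem_Iio] at h1 h2
      obtain ⟨h4, h5⟩ := hinj r s r' s' h1.1 h2.1 (congrArg Prod.fst h3)
      rw [h4, h5]
    have h0 := eq_zero_of_many_zeros (K := K) (L := L) (β ^ m) ?_ T ?_ ?_ (by omega)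
      (fun k l => u (k, l)) ?_
    · funext i
      exact congrFun (congrFun h0 i.1) i.2
    · intro i j hij
      have h1 := congrArg norm hij
      simp only [norm_pow] at h1
      exact pow_right_injective₀ (by positivity) (one_lt_pow₀ hβ hm.ne').ne' h1
    · rintro x hx y hy hxy
      obtain ⟨⟨r, s⟩, h1, rfl⟩ := Finset.mem_image.mp hx
      obtain ⟨⟨r', s'⟩, h2, rfl⟩ := Finset.mem_image.mp hy
      rw [Finset.mem_product, Finset.mem_range, Finset.mem_range] at h1 h2
      obtain ⟨h4, h5⟩ := hinj r s r' s' h1.1 h2.1 hxy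
      rw [h4, h5]
    · rintro x hx
      obtain ⟨⟨r, s⟩, h1, rfl⟩ := Finset.mem_image.mp hx
      exact mul_ne_zero (pow_ne_zero _ hβ0) (pow_ne_zero _ hc)
    · rintro x hx r' hr'
      obtain ⟨⟨r, s⟩, h1, rfl⟩ := Finset.mem_image.mp hx
      rw [Finset.mem_product, Finset.mem_range, Finset.mem_range] at h1
      have h2 := hu (⟨r + r', by have := h1.1; simp only at this; omega⟩, ⟨s, h1.2⟩)
      rw [Fintype.sum_prod_type_right] at h2
      rw [← h2]
      simp only [hzadd, hYadd, mul_assoc])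
  refine ⟨fun ν => zf (f ν).1 (f ν).2, fun ν => m * (f ν).1 + a0 (f ν).2, fun ν => (f ν).2,
    fun ν => hzf _ _, fun ν => ?_, fun ν => (f ν).2.2, hf⟩
  have := ha0 (f ν).2
  beta_reduce
  have h3 : m * ((f ν).1 + 1) ≤ m * (ρ + L) := Nat.mul_le_mul_left _ (f ν).1.2
  rw [mul_add, mul_one] at h3
  omega

/-- Comparison of the two bounds for the interpolation determinant. -/
theorem interpolation_inequality {p : ℕ} (hp : p.Prime) {t : ℕ} (ht : t ≠ 0) {D a : ℤ} (hD : 0 < D)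
    (h : a ^ 2 + D = (p : ℤ) ^ t) (hpa : ¬ (p : ℤ) ∣ 2 * a) {l : ℕ} {c : ℤ} (hc0 : c ≠ 0)
    (hcp : |c| ≤ 2 * p)
    (hc : (⟨a, 1⟩ : ℤ√(-D)) ^ l + star (⟨a, 1⟩ : ℤ√(-D)) ^ l = (c : ℤ√(-D)))
    {K L ρ S w : ℕ} (hKL : K * L ≤ t * l) (hl : l ≤ (p - 1) * p ^ w) (hρ : (p - 1) * ρ ≤ l)
    (hcard : L * (K - 1) < ρ * S) (hS : 8 * S ≤ K) (hρL : ρ + L ≤ p ^ w) :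
    p ^ (∑ i ∈ Finset.range (K * L), i) ≤ p ^ (L * ∑ k ∈ Finset.range K, k) *
      ((K * L).factorial ^ 2 * ((p ^ w) ^ (2 * L * ∑ k ∈ Finset.range K, k) *
        ((p ^ t) ^ ((p - 1) * (ρ + L)) * (2 * p) ^ (2 * S)) ^ (K * ∑ l ∈ Finset.range L, l))) := by
  obtain ⟨ψ, hψ⟩ := exists_zsqrtd_hom_complex hD
  have hm : 0 < p - 1 := Nat.sub_pos_of_lt hp.one_lt
  set β : ℤ√(-D) := ⟨a, 1⟩ with hβ
  have hβn : ‖ψ β‖ ^ 2 = (p : ℝ) ^ t := by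
    have : β.norm = (p : ℤ) ^ t := by rw [← h, Zsqrtd.norm_def]; simp [hβ]; ring
    rw [hψ, this]; simp
  have hp1 : (1 : ℝ) < p := by exact_mod_cast hp.one_lt
  have hβ1 : 1 < ‖ψ β‖ := by
    have : 1 < ‖ψ β‖ ^ 2 := by rw [hβn]; exact one_lt_pow₀ hp1 ht
    exact (one_lt_sq_iff₀ (norm_nonneg _)).mp this
  obtain ⟨z, A, B, hz, hA, hB, hdet⟩ := exists_interpolation_det_ne_zero hm hρ hcard (ψ β) (c : ℂ)
    hβ1 (by exact_mod_cast hc0)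
  set Δ := (Matrix.of fun i ν : Fin K × Fin L => (((z ν).choose (i.1 : ℕ) : ℕ) : ℤ√(-D)) *
        (β ^ A ν * (c : ℤ√(-D)) ^ B ν) ^ (i.2 : ℕ)).det with hΔ
  have hψΔ : ψ Δ = (Matrix.of fun i ν : Fin K × Fin L => ((z ν).choose (i.1 : ℕ) : ℂ) *
        (ψ β ^ A ν * (c : ℂ) ^ B ν) ^ (i.2 : ℕ)).det := by
    rw [hΔ, RingHom.map_det]
    congr 1
    ext i ν
    simp
  rw [← hψΔ] at hdet
  set H : ℕ := (p ^ t) ^ ((p - 1) * (ρ + L)) * (2 * p) ^ (2 * S) with hH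
  have hY : ∀ ν, ‖ψ β ^ A ν * (c : ℂ) ^ B ν‖ ≤ Real.sqrt H := by
    intro ν
    refine Real.le_sqrt_of_sq_le ?_
    have hc' : |(c : ℝ)| ≤ 2 * p := by exact_mod_cast hcp
    rw [norm_mul, norm_pow, norm_pow, mul_pow, pow_right_comm, hβn, Complex.norm_intCast,
      ← pow_mul |(c : ℝ)|, hH]
    push_cast
    refine mul_le_mul (pow_le_pow_right₀ (one_le_pow₀ hp1.le) (hA ν)) ?_ (by positivity)
      (by positivity)
    calc |(c : ℝ)| ^ (B ν * 2) ≤ (2 * p : ℝ) ^ (B ν * 2) := by gcongr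
      _ ≤ _ := pow_le_pow_right₀ (by linarith) (by have := hB ν; omega)
  have hZ : ∀ ν, z ν ≤ S * p ^ w := by
    intro ν
    refine Nat.le_of_mul_le_mul_left ?_ hm
    have h1 : (p - 1) * (ρ + L) ≤ (p - 1) * p ^ w := Nat.mul_le_mul_left _ hρL
    have h2 : l * B ν ≤ (p - 1) * p ^ w * (S - 1) :=
      Nat.mul_le_mul hl (by have := hB ν; omega)
    obtain ⟨S', hS'⟩ : ∃ S', S = S' + 1 := ⟨S - 1, by have := hB ν; omega⟩
    rw [hz ν]
    refine (Nat.add_le_add ((hA ν).trans h1) h2).trans_eq ?_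
    rw [hS', Nat.add_sub_cancel]; ring
  have hup := norm_det_choose_le (K := K) (L := L) (q := p ^ w) (Z := S * p ^ w)
    (by rw [← mul_assoc]; exact Nat.mul_le_mul_right _ hS) (Real.sqrt H) (Real.sqrt_nonneg _) z
    (fun ν => ψ β ^ A ν * (c : ℂ) ^ B ν) hZ hY
  rw [← hψΔ] at hup
  have hnorm : (Δ.norm : ℝ) ≤ (((K * L).factorial ^ 2 * ((p ^ w) ^ (2 * L * ∑ k ∈ Finset.range K, k) *
        H ^ (K * ∑ l ∈ Finset.range L, l)) : ℕ) : ℝ) := by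
    rw [← hψ]
    refine (pow_le_pow_left₀ (norm_nonneg _) hup 2).trans_eq ?_
    rw [mul_pow, mul_pow, ← pow_mul (Real.sqrt H), ← pow_mul (Real.sqrt H), mul_comm _ 2,
      pow_mul (Real.sqrt H) 2, Real.sq_sqrt (by positivity)]
    push_cast
    ring
  have hpos : 0 < Δ.norm := by
    have : (0 : ℝ) < Δ.norm := by rw [← hψ]; positivity
    exact_mod_cast this
  have hdvd := pow_dvd_pow_mul_norm_det hp t ht D a h hpa l c hc K L hKL z A B hz
  have hle := Int.le_of_dvd (mul_pos (pow_pos (by exact_mod_cast hp.pos) _) hpos) hdvd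
  have hnorm' : Δ.norm ≤ (((K * L).factorial ^ 2 * ((p ^ w) ^ (2 * L * ∑ k ∈ Finset.range K, k) *
        H ^ (K * ∑ l ∈ Finset.range L, l)) : ℕ) : ℤ) := by exact_mod_cast hnorm
  have hfin := hle.trans (mul_le_mul_of_nonneg_left hnorm' (by positivity))
  exact_mod_cast hfin

theorem pow_le_of_pow_sum_range_le {p q H K L : ℕ} (hK : 0 < K) (hL : 0 < L)
    (h : p ^ (∑ i ∈ Finset.range (K * L), i) ≤ p ^ (L * ∑ k ∈ Finset.range K, k) *
      ((K * L).factorial ^ 2 * (q ^ (2 * L * ∑ k ∈ Finset.range K, k) *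
        H ^ (K * ∑ l ∈ Finset.range L, l)))) :
    p ^ (K * L - 1) ≤ p ^ (K - 1) * ((K * L) ^ 4 * (q ^ (2 * (K - 1)) * H ^ (L - 1))) := by
  have hKL : K * L ≠ 0 := (Nat.mul_pos hK hL).ne'
  refine (Nat.pow_le_pow_iff_left hKL).mp ?_
  have h2 := Nat.pow_le_pow_left h 2
  have e1 := Finset.sum_range_id_mul_two (K * L)
  have e2 := Finset.sum_range_id_mul_two K
  have e3 := Finset.sum_range_id_mul_two L
  have hf : (K * L).factorial ≤ (K * L) ^ (K * L) := Nat.factorial_le_pow _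
  calc (p ^ (K * L - 1)) ^ (K * L) = (p ^ (∑ i ∈ Finset.range (K * L), i)) ^ 2 := by
        rw [← pow_mul, ← pow_mul, e1, mul_comm (K * L)]
    _ ≤ _ := h2
    _ = p ^ (L * ((∑ k ∈ Finset.range K, k) * 2)) * ((K * L).factorial ^ 4 *
        (q ^ (2 * L * ((∑ k ∈ Finset.range K, k) * 2)) *
          H ^ (K * ((∑ l ∈ Finset.range L, l) * 2)))) := by ring
    _ ≤ p ^ (L * ((∑ k ∈ Finset.range K, k) * 2)) * (((K * L) ^ (K * L)) ^ 4 *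
        (q ^ (2 * L * ((∑ k ∈ Finset.range K, k) * 2)) *
          H ^ (K * ((∑ l ∈ Finset.range L, l) * 2)))) := by gcongr
    _ = _ := by
        rw [e2, e3]
        simp only [mul_pow, ← pow_mul]
        congr 2 <;> ring

theorem mul_le_two_thousand_pow {w : ℕ} (hw : 2 ≤ w) :
    (4 * (w + 1) + 1) * (190 * (w + 1)) ≤ 2048 ^ w := by
  induction w, hw using Nat.le_induction with
  | base => norm_num
  | succ w hw ih =>
    rw [pow_succ]
    nlinarith

theorem mul_pow_four_lt {p w τ : ℕ} (hp : 2048 ≤ p) (hw : 2 ≤ w) (hτ : 0 < τ) :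
    (190 * w * τ * (4 * w + 1)) ^ 4 < p ^ ((4 * w ^ 2 - 4 * w) * τ) := by
  obtain ⟨v, rfl⟩ : ∃ v, w = v + 1 := ⟨w - 1, by omega⟩
  have hv : 1 ≤ v := by omega
  have he : (4 * (v + 1) ^ 2 - 4 * (v + 1)) * τ = ((v * (v + 1)) * τ) * 4 := by
    have : 4 * (v + 1) ^ 2 = 4 * (v * (v + 1)) + 4 * (v + 1) := by ring
    rw [this, Nat.add_sub_cancel]; ring
  rw [he, pow_mul]
  refine Nat.pow_lt_pow_left ?_ (by norm_num)
  set X := (v * (v + 1)) * τ with hX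
  have hX2 : 2 ≤ X := by
    have : 1 * 2 * 1 ≤ v * (v + 1) * τ := by gcongr; omega
    simpa using this
  have h1 : 190 * (v + 1) * τ * (4 * (v + 1) + 1) ≤ 1710 * X := by
    have : 190 * (v + 1) * τ * (4 * (v + 1) + 1) = 190 * (v + 1) * τ * (4 * v + 5) := by ring
    rw [this, hX]
    calc 190 * (v + 1) * τ * (4 * v + 5) ≤ 190 * (v + 1) * τ * (9 * v) := by gcongr; omega
      _ = _ := by ring
  have h2 : X < 2 ^ X := Nat.lt_two_pow_self
  have h3 : 1024 ^ 2 ≤ 1024 ^ X := Nat.pow_le_pow_right (by norm_num) hX2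
  calc _ ≤ 1710 * X := h1
    _ < 1024 ^ X * 2 ^ X := by nlinarith
    _ = 2048 ^ X := by rw [← mul_pow]; norm_num
    _ ≤ p ^ X := Nat.pow_le_pow_left hp X

/-- If `a ^ 2 + D = p ^ t`, the trace of `(a + √(-D)) ^ l` cannot be as small as `2 * p`
for large `l`. -/
theorem not_trace_pow_small {p : ℕ} (hp : p.Prime) (hp2 : 2048 ≤ p) {t : ℕ} (ht : t ≠ 0) {D a : ℤ}
    (hD : 0 < D) (h : a ^ 2 + D = (p : ℤ) ^ t) (hpa : ¬ (p : ℤ) ∣ 2 * a) {l : ℕ}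
    (hl : 2 * p ^ 2 < l) {c : ℤ} (hc0 : c ≠ 0) (hcp : |c| ≤ 2 * p)
    (hc : (⟨a, 1⟩ : ℤ√(-D)) ^ l + star (⟨a, 1⟩ : ℤ√(-D)) ^ l = (c : ℤ√(-D))) : False := by
  have hm : 0 < p - 1 := Nat.sub_pos_of_lt hp.one_lt
  have hex : ∃ w, l ≤ (p - 1) * p ^ w :=
    ⟨l, (Nat.lt_pow_self hp.one_lt).le.trans (Nat.le_mul_of_pos_left _ hm)⟩
  classical
  obtain ⟨w, hw, hmin⟩ : ∃ w, l ≤ (p - 1) * p ^ w ∧ ∀ v < w, (p - 1) * p ^ v < l :=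
    ⟨Nat.find hex, Nat.find_spec hex, fun v hv => not_le.mp (Nat.find_min hex hv)⟩
  have hw2 : 2 ≤ w := by
    by_contra hlt
    have h1 : (p - 1) * p ^ w ≤ p * p ^ 1 :=
      Nat.mul_le_mul (Nat.sub_le _ _) (Nat.pow_le_pow_right hp.pos (by omega))
    nlinarith
  have hsize : (4 * w + 1) * (190 * w) * (p - 1) ≤ l := by
    rcases hw2.eq_or_lt with rfl | hw3
    · have : p - 1 ≤ p := Nat.sub_le _ _
      nlinarith
    · obtain ⟨v, rfl⟩ : ∃ v, w = v + 1 := ⟨w - 1, by omega⟩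
      refine le_trans ?_ (hmin v (by omega)).le
      rw [mul_comm]
      exact Nat.mul_le_mul_left _ ((mul_le_two_thousand_pow (by omega)).trans
        (Nat.pow_le_pow_left hp2 v))
  set τ := t * (p - 1) with hτ
  have hτ0 : 0 < τ := Nat.mul_pos (Nat.pos_of_ne_zero ht) hm
  have hpw : (4 * (w + 1) + 1) * (190 * (w + 1)) ≤ p ^ w :=
    (mul_le_two_thousand_pow hw2).trans (Nat.pow_le_pow_left hp2 w)
  have hK0 : 0 < 190 * w * τ := by positivity
  have h1 := interpolation_inequality hp ht hD h hpa hc0 hcp hc (K := 190 * w * τ) (L := 4 * w + 1)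
    (ρ := 42 * w) (S := 22 * w * τ) (w := w)
    (by
      calc 190 * w * τ * (4 * w + 1) = t * ((4 * w + 1) * (190 * w) * (p - 1)) := by rw [hτ]; ring
        _ ≤ t * l := Nat.mul_le_mul_left _ hsize)
    hw
    (by
      refine le_trans ?_ hsize
      rw [mul_comm]
      exact Nat.mul_le_mul_right _ (by nlinarith))
    (by
      have h2 : (4 * w + 1) * (190 * w * τ - 1) < (4 * w + 1) * (190 * w * τ) :=
        Nat.mul_lt_mul_of_pos_left (by omega) (by omega)
      refine h2.trans_le ?_
      have : (4 * w + 1) * 190 ≤ 42 * w * 22 := by omega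
      calc (4 * w + 1) * (190 * w * τ) = ((4 * w + 1) * 190) * (w * τ) := by ring
        _ ≤ (42 * w * 22) * (w * τ) := Nat.mul_le_mul_right _ this
        _ = _ := by ring)
    (by nlinarith [Nat.zero_le (w * τ)])
    (by nlinarith)
  have h3 := pow_le_of_pow_sum_range_le hK0 (by omega) h1
  set H := (p ^ t) ^ ((p - 1) * (42 * w + (4 * w + 1))) * (2 * p) ^ (2 * (22 * w * τ)) with hH
  have hH' : H ^ (4 * w + 1 - 1) ≤ p ^ ((376 * w ^ 2 + 4 * w) * τ) := by
    rw [Nat.add_sub_cancel, hH, mul_pow, ← pow_mul, ← pow_mul, ← pow_mul, mul_pow]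
    calc _ = p ^ (4 * w * (46 * w + 1) * τ + 176 * w ^ 2 * τ) * (2 ^ 11) ^ (16 * w ^ 2 * τ) := by
          rw [← pow_mul 2 11, mul_comm (2 ^ _), ← mul_assoc, ← pow_add, hτ]
          congr 2 <;> ring
      _ ≤ p ^ (4 * w * (46 * w + 1) * τ + 176 * w ^ 2 * τ) * p ^ (16 * w ^ 2 * τ) := by
          gcongr; exact hp2
      _ = _ := by ring
  set N := 190 * w * τ * (4 * w + 1) with hN
  have hN4 := mul_pow_four_lt hp2 hw2 hτ0
  rw [← hN] at hN4
  have hle : 4 * w ≤ 4 * w ^ 2 := by nlinarith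
  have h4 : p ^ (N - 1) < p ^ (190 * w * τ - 1) * (p ^ ((4 * w ^ 2 - 4 * w) * τ) *
      ((p ^ w) ^ (2 * (190 * w * τ - 1)) * p ^ ((376 * w ^ 2 + 4 * w) * τ))) := by
    refine h3.trans_lt ?_
    have hp0 := hp.pos
    refine Nat.mul_lt_mul_of_pos_left ?_ (by positivity)
    refine Nat.mul_lt_mul_of_lt_of_le hN4 (Nat.mul_le_mul_left _ hH') (by positivity)
  rw [← pow_mul, ← pow_add, ← pow_add, ← pow_add] at h4
  have h5 := (Nat.pow_lt_pow_iff_right hp.one_lt).mp h4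
  have h6 : (4 * w ^ 2 - 4 * w) * τ + (376 * w ^ 2 + 4 * w) * τ = 380 * w ^ 2 * τ := by
    rw [← add_mul]; congr 1; omega
  have h7 : w * (2 * (190 * w * τ - 1)) ≤ 380 * w ^ 2 * τ := by
    calc w * (2 * (190 * w * τ - 1)) ≤ w * (2 * (190 * w * τ)) := by gcongr; omega
      _ = _ := by ring
  have h8 : N = 760 * w ^ 2 * τ + 190 * w * τ := by rw [hN]; ring
  have h9 : 760 * w ^ 2 * τ = 380 * w ^ 2 * τ + 380 * w ^ 2 * τ := by ring
  omega

theorem le_of_wieferich {p : ℕ} (hmod : p % 4 = 3) (hw : 2 ^ (p - 1) ≡ 1 [MOD p ^ 2]) :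
    2048 ≤ p := by
  by_contra! hlt
  have h : ∀ p < 2048, p % 4 = 3 → 2 ^ (p - 1) % p ^ 2 ≠ 1 := by decide +kernel
  refine h p hlt hmod ?_
  rw [hw]
  exact Nat.mod_eq_of_lt (Nat.one_lt_pow two_ne_zero (by omega))

theorem mul_dvd_add_pow_sub {R : Type*} [CommRing R] (x y : R) {l : ℕ} (hl : l ≠ 0) :
    x * y ∣ (x + y) ^ l - (x ^ l + y ^ l) := by
  induction l, Nat.one_le_iff_ne_zero.mpr hl using Nat.le_induction with
  | base => simp
  | succ l hl ih =>
    obtain ⟨k, rfl⟩ : ∃ k, l = k + 1 := ⟨l - 1, by omega⟩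
    obtain ⟨d, hd⟩ := ih (by omega)
    refine ⟨(x + y) * d + (x ^ k + y ^ k), ?_⟩
    linear_combination (x + y) * hd

theorem two_mul_sq_lt_of_pow_modEq {p q : ℕ} (hp : p.Prime) (hp2 : 2 < p)
    (hw : 2 ^ (p - 1) ≡ 1 [MOD p ^ 2]) (hpq : ¬ p ∣ q) (hq : ¬ q ^ (p - 1) ≡ 1 [MOD p ^ 2])
    {l : ℕ} (hl : Odd l) (hl1 : 1 < l)
    (h : (2 * q) ^ ((p - 1) * l) ≡ (2 * q) ^ (p - 1) [MOD p ^ 3]) : 2 * p ^ 2 < l := by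
  have := Fact.mk hp
  have hodd : Odd p := hp.odd_of_ne_two (by omega)
  set x := (2 * q) ^ (p - 1) with hx
  have hpx0 : ¬ p ∣ 2 * q := by
    rw [hp.dvd_mul, not_or]
    exact ⟨fun hd => by have := Nat.le_of_dvd two_pos hd; omega, hpq⟩
  have hpx : ¬ p ∣ x := fun hd => hpx0 (hp.dvd_of_dvd_pow hd)
  have hx1 : x ≡ 1 [MOD p] := by
    have := Nat.ModEq.pow_totient (n := p) (x := 2 * q)
      ((Nat.coprime_comm.mp ((hp.coprime_iff_not_dvd).mpr hpx0)))
    rwa [Nat.totient_prime hp] at this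
  have hx2 : ¬ x ≡ 1 [MOD p ^ 2] := fun hc => hq <| by
    have h1 : x ≡ 1 * q ^ (p - 1) [MOD p ^ 2] := by
      rw [hx, mul_pow]
      exact hw.mul_right _
    rw [one_mul] at h1
    exact h1.symm.trans hc
  have hxpos : 1 < x := by
    by_contra! hle
    interval_cases x
    · exact hpx (dvd_zero p)
    · exact hx2 rfl
  obtain ⟨k, rfl⟩ : ∃ k, l = k + 1 := ⟨l - 1, by omega⟩
  have hk : k ≠ 0 := by omega
  have h3 : p ^ 3 ∣ x ^ k - 1 ^ k := by
    rw [pow_mul, ← hx, pow_succ] at h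
    have h4 : x ^ k * x ≡ 1 * x [MOD p ^ 3] := by rwa [one_mul]
    have h5 := Nat.ModEq.cancel_right_of_coprime
      (Nat.Coprime.pow_left 3 ((hp.coprime_iff_not_dvd).mpr hpx)) h4
    rw [one_pow]
    exact (Nat.modEq_iff_dvd' (Nat.one_le_pow _ _ (by omega))).mp h5.symm
  have hdx : p ∣ x - 1 := (Nat.modEq_iff_dvd' hxpos.le).mp hx1.symm
  have hv := padicValNat.pow_sub_pow (p := p) hodd hxpos hdx hpx hk
  have hv1 : padicValNat p (x - 1) < 2 := by
    by_contra! hge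
    refine hx2 ((Nat.modEq_iff_dvd' hxpos.le).mpr ?_).symm
    exact (padicValNat_dvd_iff_le (by omega)).mpr hge
  have hv3 : 3 ≤ padicValNat p (x ^ k - 1 ^ k) := by
    refine (padicValNat_dvd_iff_le ?_).mp h3
    have := Nat.one_lt_pow hk hxpos
    rw [one_pow]; omega
  have hdk : p ^ 2 ∣ k := (padicValNat_dvd_iff_le hk).mpr (by omega)
  have h2k : 2 ∣ k := by
    obtain ⟨j, hj⟩ := hl
    exact ⟨j, by omega⟩
  have h6 := Nat.le_of_dvd (Nat.pos_of_ne_zero hk) (Nat.Coprime.mul_dvd_of_dvd_of_dvd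
    (Nat.Coprime.pow_right 2 (Nat.coprime_two_left.mpr hodd)) h2k hdk)
  omega

theorem trace_pow_ne_two_mul {p q : ℕ} (hp : p.Prime) (hmod : p % 4 = 3)
    (hw : 2 ^ (p - 1) ≡ 1 [MOD p ^ 2]) (hq : q.Prime) (hqp : q < p)
    (hqw : ¬ q ^ (p - 1) ≡ 1 [MOD p ^ 2]) {t : ℕ} (ht : 3 ≤ t) {D a : ℤ} (hD : 0 < D)
    (h : a ^ 2 + D = (p : ℤ) ^ t) {l : ℕ} (hl : Odd l) (hl1 : 1 < l) {c : ℤ} (hcq : |c| = 2 * q)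
    (hc : (⟨a, 1⟩ : ℤ√(-D)) ^ l + star (⟨a, 1⟩ : ℤ√(-D)) ^ l = (c : ℤ√(-D))) : False := by
  have hp2 := le_of_wieferich hmod hw
  have hpq : ¬ p ∣ q := fun hd => by have := Nat.le_of_dvd hq.pos hd; omega
  set β : ℤ√(-D) := ⟨a, 1⟩ with hβ
  have hadd : β + star β = ((2 * a : ℤ) : ℤ√(-D)) := by
    ext <;> simp [hβ]; ring
  have hmul : β * star β = (((p : ℤ) ^ t : ℤ) : ℤ√(-D)) := by
    rw [← Zsqrtd.norm_eq_mul_conj, ← h, Zsqrtd.norm_def]; simp [hβ]; ring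
  have ha : a.natAbs ∣ q := by
    have h1 := hl.add_dvd_pow_add_pow β (star β)
    rw [hadd, hc, Zsqrtd.intCast_dvd_intCast, ← dvd_abs, hcq] at h1
    exact Int.natAbs_dvd_natAbs.mpr (Int.dvd_of_mul_dvd_mul_left two_ne_zero h1)
  have hcong : (p : ℤ) ^ t ∣ (2 * a) ^ l - c := by
    have h1 := mul_dvd_add_pow_sub β (star β) (l := l) (by omega)
    rw [hadd, hmul, hc] at h1
    exact_mod_cast h1
  have heven : Even (p - 1) := ⟨(p - 1) / 2, by omega⟩
  have hcong2 : (2 * a.natAbs) ^ ((p - 1) * l) ≡ (2 * q) ^ (p - 1) [MOD p ^ 3] := by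
    have h1 : (p : ℤ) ^ 3 ∣ ((2 * a) ^ l) ^ (p - 1) - c ^ (p - 1) :=
      (pow_dvd_pow _ ht).trans (hcong.trans (sub_dvd_pow_sub_pow _ _ _))
    have h2 : c ^ (p - 1) = (2 * q : ℤ) ^ (p - 1) := by rw [← heven.pow_abs, hcq]
    have h3 : ((2 * a) ^ l) ^ (p - 1) = (2 * (a.natAbs : ℤ)) ^ ((p - 1) * l) := by
      rw [← pow_mul, mul_comm l, pow_mul, pow_mul, ← heven.pow_abs, abs_mul, Int.natCast_natAbs]
      simp
    rw [h2, h3] at h1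
    refine (Nat.ModEq.symm ?_)
    rw [Nat.modEq_iff_dvd]
    exact_mod_cast h1
  rcases (Nat.dvd_prime hq).mp ha with ha1 | haq
  · refine hqw ?_
    rw [ha1, mul_one] at hcong2
    have h1 : (2 * q) ^ (p - 1) ≡ 1 * q ^ (p - 1) [MOD p ^ 2] := by
      rw [mul_pow]
      exact hw.mul_right _
    rw [one_mul] at h1
    have h2 := hcong2.of_dvd (pow_dvd_pow p (by norm_num : 2 ≤ 3))
    have h3 := hw.pow l
    rw [one_pow, ← pow_mul] at h3
    exact h1.symm.trans (h2.symm.trans h3)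
  · rw [haq] at hcong2
    have hlarge := two_mul_sq_lt_of_pow_modEq hp (by omega) hw hpq hqw hl hl1 hcong2
    refine not_trace_pow_small hp hp2 (by omega) hD h ?_ hlarge ?_ ?_ hc
    · intro hd
      rw [Int.natCast_dvd, Int.natAbs_mul, haq, show (2 : ℤ).natAbs = 2 from rfl, hp.dvd_mul] at hd
      exact hd.elim (fun h2 => by have := Nat.le_of_dvd two_pos h2; omega) hpq
    · rintro rfl
      have := hq.pos
      simp at hcq
      omega
    · rw [hcq]
      have : (q : ℤ) < p := by exact_mod_cast hqp
      linarith

open ComplexConjugate in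
theorem re_pow_ne_of_normSq_eq {p q : ℕ} (hp : p.Prime) (hmod : p % 4 = 3)
    (hw : 2 ^ (p - 1) ≡ 1 [MOD p ^ 2]) (hq : q.Prime) (hqp : q < p)
    (hqw : ¬ q ^ (p - 1) ≡ 1 [MOD p ^ 2]) {t : ℕ} (ht : 3 ≤ t) {l : ℕ} (hl : Odd l) (hl1 : 1 < l)
    {β : ℂ} {a : ℤ} (hβa : β.re = a) (hβ : Complex.normSq β = (p : ℝ) ^ t)
    (him : (β ^ l).im ≠ 0) : |(β ^ l).re| ≠ q := by
  intro hre
  set D : ℤ := (p : ℤ) ^ t - a ^ 2 with hD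
  have hDim : (D : ℝ) = β.im ^ 2 := by
    rw [Complex.normSq_apply, hβa] at hβ
    rw [hD]
    push_cast
    rw [← hβ]
    ring
  have hβim : β.im ≠ 0 := fun h0 => him <| by
    have : β = ((a : ℝ) : ℂ) := Complex.ext (by simpa using hβa) (by simpa using h0)
    rw [this, ← Complex.ofReal_pow, Complex.ofReal_im]
  have hDpos : 0 < D := by
    have : (0 : ℝ) < D := by rw [hDim]; positivity
    exact_mod_cast this
  have hr : (β - a) * (β - a) = ((-D : ℤ) : ℂ) := by
    have : β - a = β.im * Complex.I := Complex.ext (by simp [hβa]) (by simp)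
    rw [this]
    push_cast
    have h2 : (D : ℂ) = (β.im : ℂ) ^ 2 := by exact_mod_cast congrArg (fun x : ℝ => (x : ℂ)) hDim
    rw [h2]
    linear_combination (β.im : ℂ) ^ 2 * Complex.I_mul_I
  let ψ : ℤ√(-D) →+* ℂ := Zsqrtd.lift ⟨β - a, hr⟩
  have hψ : Function.Injective ψ := Zsqrtd.lift_injective _ fun n => by
    have := mul_self_nonneg n
    omega
  have hψβ : ψ ⟨a, 1⟩ = β := by simp [ψ, Zsqrtd.lift]
  have hψβ' : ψ (star ⟨a, 1⟩) = conj β := by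
    have : β - a = β.im * Complex.I := Complex.ext (by simp [hβa]) (by simp)
    have h3 : ψ (star ⟨a, 1⟩) = a - (β - a) := by simp [ψ, Zsqrtd.lift]; ring
    rw [h3, this]
    exact Complex.ext (by simp [hβa]) (by simp)
  obtain ⟨c, hcq, hcre⟩ : ∃ c : ℤ, |c| = 2 * q ∧ (c : ℝ) = 2 * (β ^ l).re := by
    rcases abs_eq (by positivity : (0 : ℝ) ≤ q) |>.mp hre with h1 | h1
    · exact ⟨2 * q, by rw [abs_of_nonneg (by positivity)], by rw [h1]; push_cast; ring⟩
    · exact ⟨-(2 * q), by rw [abs_neg, abs_of_nonneg (by positivity)], by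
        rw [h1]; push_cast; ring⟩
  refine trace_pow_ne_two_mul hp hmod hw hq hqp hqw ht (D := D) (a := a) hDpos (by rw [hD]; ring) hl hl1
    hcq (hψ ?_)
  rw [map_add, map_pow, map_pow, hψβ, hψβ', map_intCast, ← map_pow, Complex.add_conj, ← hcre]
  simp

theorem exists_rat_add_rat_mul_of_mem_adjoin {z : ℂ} {m : ℤ} (hz : z ^ 2 = m) {x : ℂ}
    (hx : x ∈ IntermediateField.adjoin ℚ {z}) : ∃ u v : ℚ, x = u + v * z := by
  have hint : IsIntegral ℚ z := by
    refine IsIntegral.of_pow two_pos ?_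
    rw [hz]
    simpa using isIntegral_algebraMap (R := ℚ) (A := ℂ) (x := (m : ℚ))
  rw [← IntermediateField.mem_toSubalgebra,
    IntermediateField.adjoin_simple_toSubalgebra_of_isAlgebraic hint.isAlgebraic] at hx
  induction hx using Algebra.adjoin_induction with
  | mem y hy => exact ⟨0, 1, by rw [Set.mem_singleton_iff.mp hy]; simp⟩
  | algebraMap r => exact ⟨r, 0, by simp⟩
  | add x y _ _ hx hy =>
    obtain ⟨u, v, rfl⟩ := hx
    obtain ⟨u', v', rfl⟩ := hy
    exact ⟨u + u', v + v', by push_cast; ring⟩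
  | mul x y _ _ hx hy =>
    obtain ⟨u, v, rfl⟩ := hx
    obtain ⟨u', v', rfl⟩ := hy
    exact ⟨u * u' + v * v' * m, u * v' + v * u', by
      push_cast
      linear_combination ((v : ℂ) * v') * hz⟩

theorem exists_int_eq_of_isIntegral_ratCast {u : ℚ} (h : IsIntegral ℤ (u : ℂ)) :
    ∃ k : ℤ, (k : ℚ) = u := by
  have h1 : IsIntegral ℤ u :=
    (isIntegral_algebraMap_iff (A := ℚ) (B := ℂ) (algebraMap ℚ ℂ).injective).mp (by simpa using h)
  simpa using IsIntegrallyClosed.isIntegral_iff.mp h1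

theorem re_eq_zero_of_sq_eq_neg {z : ℂ} {m : ℤ} (hm : m < 0) (hz : z ^ 2 = m) : z.re = 0 := by
  have him := congrArg Complex.im hz
  have hre := congrArg Complex.re hz
  simp only [sq, Complex.mul_im, Complex.mul_re, Complex.intCast_im, Complex.intCast_re] at him hre
  by_contra h0
  have h1 : z.im = 0 := by
    have : z.re * z.im = 0 := by linarith
    exact (mul_eq_zero.mp this).resolve_left h0
  have h2 : (m : ℝ) < 0 := by exact_mod_cast hm
  rw [h1] at hre
  nlinarith [mul_self_nonneg z.re]

open ComplexConjugate in
/-- Trace, norm and discriminant of an integral element of an imaginary quadratic field. -/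
theorem exists_trace_norm_of_isIntegral {z : ℂ} {m : ℤ} (hm : m < 0) (hz : z ^ 2 = m) {x : ℂ}
    (hx : x ∈ IntermediateField.adjoin ℚ {z}) (hint : IsIntegral ℤ x) :
    ∃ (T N : ℤ) (r : ℚ), 2 * x.re = T ∧ Complex.normSq x = N ∧
      ((T ^ 2 - 4 * N : ℤ) : ℚ) = r ^ 2 * m := by
  obtain ⟨u, v, huv⟩ := exists_rat_add_rat_mul_of_mem_adjoin hz hx
  have hint' : IsIntegral ℤ (conj x) := map_isIntegral_int (starRingEnd ℂ) hint
  have hzc : conj z = -z := Complex.ext (by simp [re_eq_zero_of_sq_eq_neg hm hz]) (by simp)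
  have hxc : conj x = u - v * z := by
    rw [huv, map_add, map_mul, hzc, ← Complex.ofReal_ratCast, ← Complex.ofReal_ratCast,
      Complex.conj_ofReal, Complex.conj_ofReal]
    ring
  have htr : x + conj x = ((2 * u : ℚ) : ℂ) := by rw [hxc, huv]; push_cast; ring
  have hnm : x * conj x = ((u ^ 2 - v ^ 2 * m : ℚ) : ℂ) := by
    rw [hxc, huv]; push_cast; linear_combination (-(v : ℂ) ^ 2) * hz
  obtain ⟨T, hT⟩ := exists_int_eq_of_isIntegral_ratCast (htr ▸ hint.add hint')
  obtain ⟨N, hN⟩ := exists_int_eq_of_isIntegral_ratCast (hnm ▸ hint.mul hint')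
  refine ⟨T, N, 2 * v, ?_, ?_, ?_⟩
  · rw [← hT, Complex.add_conj] at htr
    exact_mod_cast htr
  · rw [← hN, Complex.mul_conj] at hnm
    exact_mod_cast hnm
  · push_cast
    rw [hT, hN]
    ring

theorem padicValInt_two_odd_of_eq {X m : ℤ} (hX : X ≠ 0) (hm : m % 4 = 2) {r : ℚ}
    (h : (X : ℚ) = r ^ 2 * m) : Odd (padicValInt 2 X) := by
  have hr : r ≠ 0 := by
    rintro rfl
    exact hX (by simpa using h)
  have hm0 : (m : ℚ) ≠ 0 := by
    have : m ≠ 0 := by rintro rfl; simp at hm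
    exact_mod_cast this
  have hm1 : padicValInt 2 m = 1 := by
    obtain ⟨k, rfl⟩ : ∃ k, m = 2 * k := ⟨m / 2, by omega⟩
    rw [padicValInt.mul two_ne_zero (by omega), padicValInt.eq_zero_of_not_dvd (z := k)
      (by push_cast; omega), add_zero]
    exact padicValInt.self (p := 2) (by norm_num)
  have h1 := congrArg (padicValRat 2) h
  rw [padicValRat.mul (pow_ne_zero 2 hr) hm0, padicValRat.pow, padicValRat.of_int,
    padicValRat.of_int, hm1] at h1
  have h2 : Odd ((padicValInt 2 X : ℕ) : ℤ) := ⟨padicValRat 2 r, by rw [h1]; push_cast; ring⟩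
  exact_mod_cast h2

theorem not_odd_of_eq {X m : ℤ} (hm : m % 4 = 2) {r : ℚ} (h : (X : ℚ) = r ^ 2 * m) : ¬ Odd X := by
  intro hX
  have hX0 : X ≠ 0 := by rintro rfl; simp at hX
  have h1 := padicValInt_two_odd_of_eq hX0 hm h
  rw [padicValInt.eq_zero_of_not_dvd (by obtain ⟨k, rfl⟩ := hX; push_cast; omega)] at h1
  simp at h1

/-- The imaginary quadratic fields `ℚ(√m)` with `m ≡ 2 [ZMOD 4]` have only the units `±1`. -/
theorem eq_one_or_neg_one_of_normSq_eq_one {z : ℂ} {m : ℤ} (hm : m < 0) (hm4 : m % 4 = 2)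
    (hz : z ^ 2 = m) {x : ℂ} (hx : x ∈ IntermediateField.adjoin ℚ {z}) (hint : IsIntegral ℤ x)
    (h1 : Complex.normSq x = 1) : x = 1 ∨ x = -1 := by
  obtain ⟨T, N, r, hT, hN, hr⟩ := exists_trace_norm_of_isIntegral hm hz hx hint
  obtain rfl : N = 1 := by rw [h1] at hN; exact_mod_cast hN.symm
  have hle : T ^ 2 ≤ 4 := by
    have h2 : ((T ^ 2 - 4 * 1 : ℤ) : ℚ) ≤ 0 := by
      rw [hr]
      exact mul_nonpos_of_nonneg_of_nonpos (sq_nonneg r) (by exact_mod_cast hm.le)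
    have h3 : T ^ 2 - 4 * 1 ≤ 0 := by exact_mod_cast h2
    linarith
  have hTlo : -2 ≤ T := by nlinarith
  have hThi : T ≤ 2 := by nlinarith
  have hdisc : ¬ Odd (T ^ 2 - 4 * 1) := not_odd_of_eq hm4 hr
  have himz : ∀ s : ℝ, s ^ 2 = 1 → x.re = s → x = s := fun s hs hxs => by
    rw [Complex.normSq_apply, hxs] at h1
    have : x.im = 0 := by
      have : x.im * x.im = 0 := by linarith [sq s]
      exact mul_self_eq_zero.mp this
    exact Complex.ext (by simpa using hxs) (by simpa using this)
  interval_cases T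
  · right
    have := himz (-1) (by norm_num) (by push_cast at hT; linarith)
    simpa using this
  · exact absurd (by decide) hdisc
  · have h2 := padicValInt_two_odd_of_eq (by norm_num) hm4 hr
    have h3 : padicValInt 2 (0 ^ 2 - 4 * 1) = 2 := by
      have : ((0 : ℤ) ^ 2 - 4 * 1) = -((2 : ℕ) ^ 2 : ℕ) := by norm_num
      rw [this, padicValInt, Int.natAbs_neg, Int.natAbs_natCast, padicValNat.prime_pow]
    rw [h3] at h2
    exact absurd h2 (by decide)
  · exact absurd (by decide) hdisc
  · left
    have := himz 1 (by norm_num) (by push_cast at hT; linarith)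
    simpa using this

theorem span_pair_mul_span_pair_eq {R : Type*} [CommRing R] {p α α' : R} (h : p ∣ α * α')
    (hco : IsCoprime p (α + α')) :
    Ideal.span {p, α} * Ideal.span {p, α'} = Ideal.span {p} := by
  apply le_antisymm
  · rw [Ideal.span_pair_mul_span_pair, Ideal.span_le]
    rintro x (rfl | rfl | rfl | rfl) <;> rw [SetLike.mem_coe, Ideal.mem_span_singleton]
    · exact dvd_mul_right _ _
    · exact dvd_mul_right _ _
    · exact dvd_mul_left _ _
    · exact h
  · rw [Ideal.span_singleton_le_iff_mem]
    obtain ⟨x, y, hxy⟩ := hco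
    have hp1 : p ∈ Ideal.span {p, α} := Ideal.subset_span (by simp)
    have hp2 : p ∈ Ideal.span {p, α'} := Ideal.subset_span (by simp)
    have hα : α ∈ Ideal.span {p, α} := Ideal.subset_span (by simp)
    have hα' : α' ∈ Ideal.span {p, α'} := Ideal.subset_span (by simp)
    have hmem := add_mem (Ideal.mul_mem_left _ x (Ideal.mul_mem_mul hp1 hp2))
      (Ideal.mul_mem_left _ y (add_mem (Ideal.mul_mem_mul hp1 hα') (Ideal.mul_mem_mul hα hp2)))
    rwa [show x * (p * p) + y * (p * α' + α * p) = p by linear_combination p * hxy] at hmem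

theorem isCoprime_span_pair {R : Type*} [CommRing R] {p α α' : R} (hco : IsCoprime p (α + α')) :
    IsCoprime (Ideal.span {p, α}) (Ideal.span {α'}) := by
  rw [Ideal.isCoprime_iff_exists]
  obtain ⟨x, y, hxy⟩ := hco
  refine ⟨x * p + y * α, ?_, y * α', ?_, by linear_combination hxy⟩
  · exact add_mem (Ideal.mul_mem_left _ _ (Ideal.subset_span (by simp)))
      (Ideal.mul_mem_left _ _ (Ideal.subset_span (by simp)))
  · exact Ideal.mul_mem_left _ _ (Ideal.mem_span_singleton_self _)

theorem span_singleton_eq_pow_span_pair {R : Type*} [CommRing R] [IsDedekindDomain R] {p α α' : R}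
    {n : ℕ} (hn : n ≠ 0) (hp : p ≠ 0) (h : α * α' = p ^ n) (hco : IsCoprime p (α + α')) :
    Ideal.span {α} = Ideal.span {p, α} ^ n := by
  set P := Ideal.span {p, α} with hP
  set Q := Ideal.span {p, α'} with hQ
  have hPQ : P * Q = Ideal.span {p} := span_pair_mul_span_pair_eq (h ▸ dvd_pow_self p hn) hco
  have hprod : P ^ n * Q ^ n = Ideal.span {α} * Ideal.span {α'} := by
    rw [← mul_pow, hPQ, Ideal.span_singleton_pow, Ideal.span_singleton_mul_span_singleton, h]
  have h1 : P ^ n ∣ Ideal.span {α} :=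
    ((isCoprime_span_pair hco).pow_left).dvd_of_dvd_mul_right (hprod ▸ dvd_mul_right _ _)
  have h2 : Q ^ n ∣ Ideal.span {α'} := by
    have hco' : IsCoprime p (α' + α) := by rwa [add_comm]
    exact ((isCoprime_span_pair hco').pow_left).dvd_of_dvd_mul_left (hprod ▸ dvd_mul_left _ _)
  obtain ⟨X, hX⟩ := h1
  obtain ⟨Y, hY⟩ := h2
  have h0 : P ^ n * Q ^ n ≠ 0 := by
    rw [hprod, Ideal.span_singleton_mul_span_singleton, h, Ne, Ideal.zero_eq_bot,
      Ideal.span_singleton_eq_bot]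
    exact pow_ne_zero n hp
  have hXY : X * Y = 1 := by
    refine mul_left_cancel₀ h0 ?_
    rw [mul_one]
    nth_rewrite 2 [hprod]
    rw [hX, hY]
    ring
  rw [hX, Ideal.isUnit_iff.mp (IsUnit.of_mul_eq_one _ hXY), Ideal.mul_top]

theorem orderOf_mk0_eq {R : Type*} [CommRing R] [IsDedekindDomain R] {P : Ideal R}
    (hP : P ∈ nonZeroDivisors (Ideal R)) {n : ℕ} {α : R} (h : Ideal.span {α} = P ^ n)
    (hα : ∀ l t : ℕ, l.Prime → n = l * t → ∀ (β : R) (u : Rˣ), β ^ l * u ≠ α) :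
    orderOf (ClassGroup.mk0 ⟨P, hP⟩) = n := by
  have hmk : ∀ k, ClassGroup.mk0 ⟨P, hP⟩ ^ k = 1 ↔ (P ^ k).IsPrincipal := fun k => by
    rw [← map_pow, ← ClassGroup.mk0_eq_one_iff (pow_mem hP k)]
    rfl
  have hdvd : orderOf (ClassGroup.mk0 ⟨P, hP⟩) ∣ n :=
    orderOf_dvd_of_pow_eq_one ((hmk n).mpr ⟨⟨α, h.symm⟩⟩)
  obtain ⟨k, hk⟩ := hdvd
  by_cases hk1 : k = 1
  · rw [hk1, mul_one] at hk
    exact hk.symm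
  exfalso
  obtain ⟨l, hl, j, rfl⟩ := Nat.exists_prime_and_dvd hk1
  set s := orderOf (ClassGroup.mk0 ⟨P, hP⟩) with hs
  obtain ⟨β, hβ⟩ := ((hmk (s * j)).mp (by rw [pow_mul, hs, pow_orderOf_eq_one, one_pow])).principal
  have hβ' : P ^ (s * j) = Ideal.span {β} := hβ
  have hspan : Ideal.span {β ^ l} = Ideal.span {α} := by
    rw [h, ← Ideal.span_singleton_pow, ← hβ', ← pow_mul, hk]
    ring_nf
  obtain ⟨u, hu⟩ := Ideal.span_singleton_eq_span_singleton.mp hspan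
  exact hα l (s * j) hl (by rw [hk]; ring) β u hu

open NumberField in
/-- In `ℚ(√(q ^ 2 - p ^ n))`, the element `q + √(q ^ 2 - p ^ n)` is not a unit times an `l`-th
power. -/
theorem pow_mul_unit_ne {p : ℕ} (hp : p.Prime) (hmod : p % 4 = 3)
    (hw : 2 ^ (p - 1) ≡ 1 [MOD p ^ 2]) {q : ℕ} (hq : q.Prime) (hq2 : Odd q) (hqp : q < p)
    (hqw : ¬ q ^ (p - 1) ≡ 1 [MOD p ^ 2]) {n : ℕ} (hodd : Odd n) (hcomp : 1 < n ∧ ¬ n.Prime)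
    {z : ℂ} (hz : z ^ 2 = (q : ℂ) ^ 2 - (p : ℂ) ^ n) {K : IntermediateField ℚ ℂ}
    (hK : K = IntermediateField.adjoin ℚ {z}) {ω : 𝓞 K} (hω : ω ^ 2 = (q : 𝓞 K) ^ 2 - (p : 𝓞 K) ^ n)
    {l t : ℕ} (hl : l.Prime) (hn : n = l * t) (β : 𝓞 K) (u : (𝓞 K)ˣ) :
    β ^ l * u ≠ q + ω := by
  intro hβ
  set m : ℤ := (q : ℤ) ^ 2 - (p : ℤ) ^ n with hm
  have hm0 : m < 0 := by
    have h1 : q ^ 2 < p ^ 2 := Nat.pow_lt_pow_left hqp two_ne_zero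
    have h2 : p ^ 2 ≤ p ^ n := Nat.pow_le_pow_right hp.pos hcomp.1
    have : (q : ℤ) ^ 2 < (p : ℤ) ^ n := by exact_mod_cast h1.trans_le h2
    rw [hm]; linarith
  have hm4 : m % 4 = 2 := by
    have h1 : (q : ℤ) ^ 2 ≡ 1 [ZMOD 4] := by
      obtain ⟨k, rfl⟩ := hq2
      exact (Int.modEq_iff_dvd.mpr ⟨k ^ 2 + k, by push_cast; ring⟩ : 1 ≡ _ [ZMOD 4]).symm
    have h2 : (p : ℤ) ^ n ≡ -1 [ZMOD 4] := by
      have : (p : ℤ) ≡ -1 [ZMOD 4] := by unfold Int.ModEq; omega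
      simpa [hodd.neg_one_pow] using this.pow n
    exact (h1.sub h2).trans (show (1 - -1 : ℤ) ≡ 2 [ZMOD 4] by decide)
  have hzm : z ^ 2 = (m : ℂ) := by rw [hz, hm]; push_cast; ring
  let f : 𝓞 K →+* ℂ := (algebraMap K ℂ).comp (algebraMap (𝓞 K) K)
  have hmem : ∀ x : 𝓞 K, f x ∈ IntermediateField.adjoin ℚ {z} := fun x => by
    rw [← hK]; exact (x : K).2
  have hint : ∀ x : 𝓞 K, IsIntegral ℤ (f x) := fun x =>
    map_isIntegral_int f (IsIntegralClosure.isIntegral ℤ K x)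
  have hωm : f ω ^ 2 = (m : ℂ) := by
    rw [← map_pow, hω, hm]
    simp
  have hωre := re_eq_zero_of_sq_eq_neg hm0 hωm
  have hωim : (f ω).im ^ 2 = -m := by
    have := congrArg Complex.re hωm
    rw [sq, Complex.mul_re, hωre, Complex.intCast_re] at this
    linarith [sq (f ω).im]
  have hu : f u = 1 ∨ f u = -1 := by
    obtain ⟨-, N, -, -, hN, -⟩ := exists_trace_norm_of_isIntegral hm0 hzm (hmem u) (hint u)
    obtain ⟨-, N', -, -, hN', -⟩ :=
      exists_trace_norm_of_isIntegral hm0 hzm (hmem ↑u⁻¹) (hint ↑u⁻¹)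
    refine eq_one_or_neg_one_of_normSq_eq_one hm0 hm4 hzm (hmem u) (hint u) ?_
    have h1 : N * N' = 1 := by
      have : Complex.normSq (f u) * Complex.normSq (f ↑u⁻¹) = 1 := by
        rw [← map_mul, ← map_mul, Units.mul_inv, map_one, map_one]
      rw [hN, hN'] at this
      exact_mod_cast this
    have h2 : 0 ≤ N := by
      have := Complex.normSq_nonneg (f u)
      rw [hN] at this
      exact_mod_cast this
    rw [hN, Int.eq_one_or_neg_one_of_mul_eq_one h1 |>.resolve_right (by omega), Int.cast_one]
  set b := f β with hb
  have hbl : b ^ l * f u = q + f ω := by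
    rw [hb, ← map_pow, ← map_mul, hβ]; simp
  have hsign : ∃ s : ℝ, |s| = 1 ∧ b ^ l = s * (q + f ω) := by
    rcases hu with h1 | h1 <;> rw [h1] at hbl
    · exact ⟨1, by simp, by rw [← hbl]; simp⟩
    · exact ⟨-1, by simp, by rw [← hbl]; simp⟩
  obtain ⟨s, hs, hbs⟩ := hsign
  have hs0 : s ≠ 0 := by rintro rfl; simp at hs
  have hre : (b ^ l).re = s * q := by rw [hbs, Complex.re_ofReal_mul]; simp [hωre]
  have him : (b ^ l).im = s * (f ω).im := by rw [hbs, Complex.im_ofReal_mul]; simp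
  have him0 : (b ^ l).im ≠ 0 := by
    rw [him]
    refine mul_ne_zero hs0 fun h0 => ?_
    rw [h0] at hωim
    have : (m : ℝ) = 0 := by linarith [hωim]
    exact hm0.ne (by exact_mod_cast this)
  obtain ⟨T, N, r, hT, hN, hr⟩ := exists_trace_norm_of_isIntegral hm0 hzm (hmem β) (hint β)
  have hnorm : Complex.normSq b = (p : ℝ) ^ t := by
    refine (pow_left_inj₀ (Complex.normSq_nonneg b) (by positivity) hl.ne_zero).mp ?_
    rw [← map_pow, Complex.normSq_apply, hre, him, ← pow_mul, mul_comm t, ← hn]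
    have h1 : s * s = 1 := by rw [← abs_mul_abs_self, hs, one_mul]
    have h2 : (m : ℝ) = (q : ℝ) ^ 2 - (p : ℝ) ^ n := by rw [hm]; push_cast; ring
    rw [h2] at hωim
    linear_combination ((q : ℝ) ^ 2 + (f ω).im ^ 2) * h1 + hωim
  have hNp : N = (p : ℤ) ^ t := by
    have : (N : ℝ) = (p : ℝ) ^ t := by rw [← hN, hnorm]
    exact_mod_cast this
  have hTe : Even T := by
    by_contra hTo
    rw [Int.not_even_iff_odd] at hTo
    refine not_odd_of_eq hm4 hr ?_
    exact hTo.pow.sub_even ⟨2 * N, by ring⟩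
  obtain ⟨a, ha⟩ := hTe
  have hba : b.re = a := by
    have : 2 * b.re = T := hT
    rw [ha] at this
    push_cast at this
    linarith
  obtain ⟨hlodd, htodd⟩ : Odd l ∧ Odd t := Nat.odd_mul.mp (hn ▸ hodd)
  have ht1 : t ≠ 1 := by
    rintro rfl
    rw [mul_one] at hn
    exact hcomp.2 (hn ▸ hl)
  have ht3 : 3 ≤ t := by obtain ⟨j, rfl⟩ := htodd; omega
  refine re_pow_ne_of_normSq_eq hp hmod hw hq hqp hqw ht3 hlodd hl.one_lt hba hnorm him0 ?_
  rw [hre, abs_mul, hs, one_mul, Nat.abs_cast]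

open NumberField in
theorem span_pair_ne_top {p q n : ℕ} (hp : p.Prime) (hp2 : Odd p) (hq : q.Prime) (hqp : q < p)
    (hn : 1 < n) {z : ℂ} (hz : z ^ 2 = (q : ℂ) ^ 2 - (p : ℂ) ^ n) {K : IntermediateField ℚ ℂ}
    (hK : K = IntermediateField.adjoin ℚ {z}) {ω : 𝓞 K} (hω : ω ^ 2 = (q : 𝓞 K) ^ 2 - (p : 𝓞 K) ^ n) :
    Ideal.span {(p : 𝓞 K), q + ω} ≠ ⊤ := by
  intro htop
  set m : ℤ := (q : ℤ) ^ 2 - (p : ℤ) ^ n with hm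
  have hm0 : m < 0 := by
    have h1 : q ^ 2 < p ^ 2 := Nat.pow_lt_pow_left hqp two_ne_zero
    have h2 : p ^ 2 ≤ p ^ n := Nat.pow_le_pow_right hp.pos hn
    have : (q : ℤ) ^ 2 < (p : ℤ) ^ n := by exact_mod_cast h1.trans_le h2
    rw [hm]; linarith
  have hzm : z ^ 2 = (m : ℂ) := by rw [hz, hm]; push_cast; ring
  have hdvd : (p : 𝓞 K) ∣ q + -ω := by
    obtain ⟨a, b, hab⟩ := Ideal.mem_span_pair.mp ((Ideal.eq_top_iff_one _).mp htop)
    obtain ⟨c, hc⟩ : (p : 𝓞 K) ∣ (p : 𝓞 K) ^ n := dvd_pow_self _ (by omega)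
    exact ⟨a * (q - ω) + b * c, by
      linear_combination (-(q - ω)) * hab - b * hω + b * hc⟩
  obtain ⟨y, hy⟩ := hdvd
  let f : 𝓞 K →+* ℂ := (algebraMap K ℂ).comp (algebraMap (𝓞 K) K)
  have hωre : (f ω).re = 0 := re_eq_zero_of_sq_eq_neg hm0 (by rw [← map_pow, hω, hm]; simp)
  obtain ⟨T, -, -, hT, -⟩ := exists_trace_norm_of_isIntegral hm0 hzm (x := f y)
    (by rw [← hK]; exact (y : K).2) (map_isIntegral_int f (IsIntegralClosure.isIntegral ℤ K y))
  have h1 : (q : ℝ) = p * (f y).re := by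
    have := congrArg (fun x => (f x).re) hy
    simpa [hωre] using this
  have h2 : ((2 * q : ℕ) : ℤ) = p * T := by
    have : (2 * q : ℝ) = p * T := by rw [← hT, h1]; ring
    exact_mod_cast this
  have h3 : p ∣ 2 * q := by exact_mod_cast Dvd.intro _ h2.symm
  rcases (Nat.Prime.dvd_mul hp).mp h3 with h | h
  · rw [(Nat.prime_dvd_prime_iff_eq hp Nat.prime_two).mp h] at hp2
    exact absurd hp2 (by decide)
  · exact absurd (Nat.le_of_dvd hq.pos h) (by omega)

/-- Two proper ideals whose product is generated by a prime number are prime, in the ring of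
integers of a field of degree at most two. -/
theorem isPrime_of_mul_eq_span {K : Type*} [Field K] [NumberField K]
    (hK : Module.finrank ℚ K ≤ 2) {p : ℕ} (hp : p.Prime)
    {P Q : Ideal (NumberField.RingOfIntegers K)} (hP : P ≠ ⊤) (hQ : Q ≠ ⊤)
    (h : P * Q = Ideal.span {(p : NumberField.RingOfIntegers K)}) : P.IsPrime ∧ Q.IsPrime := by
  have hnorm : Ideal.absNorm P * Ideal.absNorm Q = p ^ Module.finrank ℚ K := by
    rw [← map_mul, h, Ideal.absNorm_span_singleton, ← NumberField.RingOfIntegers.rank,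
      ← map_natCast (algebraMap ℤ (NumberField.RingOfIntegers K)) p, Algebra.norm_algebraMap]
    simp [Int.natAbs_pow]
  have hP1 : Ideal.absNorm P ≠ 1 := mt Ideal.absNorm_eq_one_iff.mp hP
  have hQ1 : Ideal.absNorm Q ≠ 1 := mt Ideal.absNorm_eq_one_iff.mp hQ
  have hpos : 0 < Module.finrank ℚ K := Module.finrank_pos
  have h2 : Module.finrank ℚ K = 2 := by
    by_contra hne
    have h1 : Module.finrank ℚ K = 1 := by omega
    rw [h1, pow_one] at hnorm
    rcases (Nat.prime_mul_iff.mp (hnorm ▸ hp)) with h | h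
    · exact hQ1 h.2
    · exact hP1 h.2
  rw [h2, hp.mul_eq_prime_sq_iff hP1 hQ1] at hnorm
  exact ⟨Ideal.isPrime_of_irreducible_absNorm (hnorm.1.symm ▸ hp),
    Ideal.isPrime_of_irreducible_absNorm (hnorm.2.symm ▸ hp)⟩

open Polynomial in
theorem finrank_adjoin_le_two {z : ℂ} {m : ℤ} (hz : z ^ 2 = m) :
    Module.finrank ℚ (IntermediateField.adjoin ℚ {z}) ≤ 2 := by
  have hmonic : (X ^ 2 - C (m : ℚ)).Monic := monic_X_pow_sub_C _ two_ne_zero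
  have hroot : aeval z (X ^ 2 - C (m : ℚ)) = 0 := by simp [hz]
  rw [IntermediateField.adjoin.finrank ⟨_, hmonic, hroot⟩, ← natDegree_X_pow_sub_C (n := 2)
    (r := (m : ℚ))]
  exact natDegree_le_of_dvd (minpoly.dvd _ _ hroot) hmonic.ne_zero

/-- Let `p` be a prime with `p ≡ 3 (mod 4)` and `2^(p−1) ≡ 1 (mod p^2)`, let `q1` be a prime
factor of `p − 2` such that `q1^(p−1) ≢ 1 (mod p^2)`, and let `n` be an odd composite number.
Then `p` splits in the imaginary quadratic field `K = ℚ(√(q1^2 − p^n))`, and for any prime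
ideal `℘` of the ring of integers of `K` lying over `p`, the order of the ideal class of `℘`
in the ideal class group of `K` is exactly `n`. -/
theorem stmt_9 (p : ℕ) (hp : p.Prime) (hmod : p % 4 = 3)
    (hw : 2 ^ (p - 1) ≡ 1 [MOD p ^ 2])
    (q1 : ℕ) (hq1 : q1.Prime) (hq1dvd : q1 ∣ p - 2)
    (hq1nw : ¬ (q1 ^ (p - 1) ≡ 1 [MOD p ^ 2]))
    (n : ℕ) (hodd : Odd n) (hcomp : 1 < n ∧ ¬ n.Prime)
    (z : ℂ) (hz : z ^ 2 = (q1 : ℂ) ^ 2 - (p : ℂ) ^ n)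
    (K : IntermediateField ℚ ℂ) (hK : K = IntermediateField.adjoin ℚ {z})
    [NumberField K] :
    (∃ P Q : Ideal (NumberField.RingOfIntegers K), P ≠ Q ∧ P.IsPrime ∧ Q.IsPrime ∧
        P * Q = Ideal.span {(p : NumberField.RingOfIntegers K)}) ∧
    ∀ (P : Ideal (NumberField.RingOfIntegers K)), P.IsPrime →
      (p : NumberField.RingOfIntegers K) ∈ P → ∀ (hP0 : P ≠ 0),
      orderOf (ClassGroup.mk0 ⟨P, mem_nonZeroDivisors_of_ne_zero hP0⟩) = n := by
  have hp2 : Odd p := Nat.odd_iff.mpr (by omega)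
  have hp3 : 3 ≤ p := by have := hp.two_le; omega
  have hqodd : Odd q1 := Odd.of_dvd_nat (Nat.odd_iff.mpr (by omega)) hq1dvd
  have hqp : q1 < p := by have := Nat.le_of_dvd (by omega) hq1dvd; omega
  have hzm : z ^ 2 = (((q1 : ℤ) ^ 2 - (p : ℤ) ^ n : ℤ) : ℂ) := by rw [hz]; push_cast; ring
  have hzint : IsIntegral ℤ z :=
    IsIntegral.of_pow two_pos (by rw [hzm]; exact isIntegral_algebraMap (R := ℤ))
  have hzK : z ∈ K := hK ▸ IntermediateField.mem_adjoin_simple_self ℚ z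
  have hzKint : IsIntegral ℤ (⟨z, hzK⟩ : K) :=
    (isIntegral_algebraMap_iff (algebraMap K ℂ).injective).mp hzint
  have hfin : Module.finrank ℚ K ≤ 2 := by rw [hK]; exact finrank_adjoin_le_two hzm
  obtain ⟨ω, hω⟩ : ∃ ω : NumberField.RingOfIntegers K,
      ω ^ 2 = (q1 : NumberField.RingOfIntegers K) ^ 2 - (p : NumberField.RingOfIntegers K) ^ n := by
    refine ⟨⟨⟨z, hzK⟩, hzKint⟩, ?_⟩
    apply ((algebraMap K ℂ).injective.comp NumberField.RingOfIntegers.coe_injective)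
    simp only [Function.comp_apply, map_pow, map_sub, map_natCast]
    exact hz
  have hω' : (-ω) ^ 2 = (q1 : NumberField.RingOfIntegers K) ^ 2
      - (p : NumberField.RingOfIntegers K) ^ n := by rw [neg_sq, hω]
  have hco : IsCoprime (p : NumberField.RingOfIntegers K) ((q1 + ω) + (q1 + -ω)) := by
    have h1 : Nat.Coprime p (2 * q1) :=
      Nat.Coprime.mul_right (Nat.coprime_two_right.mpr hp2)
        ((Nat.coprime_primes hp hq1).mpr hqp.ne')
    have h2 := (Nat.isCoprime_iff_coprime.mpr h1).map
      (Int.castRingHom (NumberField.RingOfIntegers K))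
    simp only [Nat.cast_mul, Nat.cast_ofNat, map_mul, map_natCast, map_ofNat] at h2
    convert h2 using 1
    ring
  have hco' : IsCoprime (p : NumberField.RingOfIntegers K) ((q1 + -ω) + (q1 + ω)) := by
    rwa [add_comm]
  have hmul : (q1 + ω) * (q1 + -ω) = (p : NumberField.RingOfIntegers K) ^ n := by
    linear_combination -hω
  have hmul' : (q1 + -ω) * (q1 + ω) = (p : NumberField.RingOfIntegers K) ^ n := by
    rw [mul_comm, hmul]
  have hn0 : n ≠ 0 := by omega
  have hp0 : (p : NumberField.RingOfIntegers K) ≠ 0 := Nat.cast_ne_zero.mpr hp.ne_zero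
  set P₀ := Ideal.span {(p : NumberField.RingOfIntegers K), q1 + ω} with hP₀
  set Q₀ := Ideal.span {(p : NumberField.RingOfIntegers K), q1 + -ω} with hQ₀
  have hPQ : P₀ * Q₀ = Ideal.span {(p : NumberField.RingOfIntegers K)} :=
    span_pair_mul_span_pair_eq (hmul ▸ dvd_pow_self _ hn0) hco
  have hPt : P₀ ≠ ⊤ := span_pair_ne_top hp hp2 hq1 hqp hcomp.1 hz hK hω
  have hQt : Q₀ ≠ ⊤ := span_pair_ne_top hp hp2 hq1 hqp hcomp.1 hz hK hω'
  obtain ⟨hPp, hQp⟩ := isPrime_of_mul_eq_span hfin hp hPt hQt hPQ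
  have hbot : ∀ I : Ideal (NumberField.RingOfIntegers K),
      (p : NumberField.RingOfIntegers K) ∈ I → I ≠ ⊥ := by
    rintro I hI rfl
    exact hp0 ((Ideal.mem_bot).mp hI)
  have hpP : (p : NumberField.RingOfIntegers K) ∈ P₀ := Ideal.subset_span (by simp)
  have hpQ : (p : NumberField.RingOfIntegers K) ∈ Q₀ := Ideal.subset_span (by simp)
  refine ⟨⟨P₀, Q₀, fun heq => hPt ?_, hPp, hQp, hPQ⟩, fun P hP hpmem hP0 => ?_⟩
  · obtain ⟨x, y, hxy⟩ := hco
    rw [Ideal.eq_top_iff_one, ← hxy]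
    refine add_mem (Ideal.mul_mem_left _ _ hpP) (Ideal.mul_mem_left _ _ (add_mem ?_ ?_))
    · exact Ideal.subset_span (by simp)
    · rw [heq]
      exact Ideal.subset_span (by simp)
  · have hle : P₀ * Q₀ ≤ P := by rwa [hPQ, Ideal.span_singleton_le_iff_mem]
    rcases hP.mul_le.mp hle with h | h
    · obtain rfl := (hPp.isMaximal (hbot _ hpP)).eq_of_le hP.ne_top h
      exact orderOf_mk0_eq _ (span_singleton_eq_pow_span_pair hn0 hp0 hmul hco)
        fun l t hl hlt => pow_mul_unit_ne hp hmod hw hq1 hqodd hqp hq1nw hodd hcomp hz hK hω hl hlt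
    · obtain rfl := (hQp.isMaximal (hbot _ hpQ)).eq_of_le hP.ne_top h
      exact orderOf_mk0_eq _ (span_singleton_eq_pow_span_pair hn0 hp0 hmul' hco')
        fun l t hl hlt => pow_mul_unit_ne hp hmod hw hq1 hqodd hqp hq1nw hodd hcomp hz hK hω' hl hlt
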